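/- arXiv:2306.03720 — 2 statements merged into one kernel-verified Lean document; each statement's English description precedes it below -/
import Mathlib

section
/- Assume d ≥ 2, k ∈ {1,…,d−1}, and 2 < p < 2k/(k−1) (where 2k/(k−1) := ∞ if k = 1). Let (g_ε) be (s,γ)-admissible for some s > d/(d+1) and γ > 1. Then there exist constants 0 < c' ≤ C' < ∞ and thresholds ε₀, δ₀, m₀ ∈ (0,1/2], depending only on d, k, p, s, γ and the admissibility constants, with the following property: for all ε ∈ (0,ε₀), δ ∈ (0,δ₀), m ∈ (0,m₀], and every nonnegative measurable a : (0,∞) → [0,∞) with ∫_0^m a(t)² dt < ∞, the function v ∈ L²(ℝ^d) defined by v̂(ξ) = 1_{||ξ|−1| ≤ m} · 1_{C^k_δ}(ξ/|ξ|) · a(||ξ|−1|) satisfies c' δ^{d−k} ∫_0^m a(t)²(ε+t^γ) dt ≤ q_ε(v) ≤ C' δ^{d−k} ∫_0^m a(t)²(ε+t^γ) dt and ‖v‖_{L^p(ℝ^d)} ≥ c' δ^{(d−k)(1−1/p)} (δ²+m)^{(k−1)/2 − k/p} ∫_0^m a(t) dt. -/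
open MeasureTheory Real Filter
open scoped ENNReal FourierTransform RealInnerProductSpace Topology

noncomputable section

/-- Euclidean space `ℝ^d`. -/
abbrev Rd (d : ℕ) : Type := EuclideanSpace ℝ (Fin d)

/-- `U` is the (distributional, hence `L²`-) Fourier transform of `u`:
it pairs against Schwartz functions the way the Fourier transform of `u` must. -/
def IsFT {d : ℕ} (U u : Rd d → ℂ) : Prop :=
  ∀ φ : SchwartzMap (Rd d) ℂ, ∫ ξ, U ξ * φ ξ = ∫ x, u x * 𝓕 (⇑φ) x

/-- An element of `H^s(ℝ^d)`: an `L²` function `toFun` together with its Fourier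
transform `ft`, satisfying the `H^s` integrability condition. -/
structure HsFn (d : ℕ) (s : ℝ) where
  toFun : Rd d → ℂ
  ft : Rd d → ℂ
  memL2 : MemLp toFun 2 volume
  ft_memL2 : MemLp ft 2 volume
  isFT : IsFT ft toFun
  memHs : Integrable (fun ξ : Rd d => ‖ft ξ‖ ^ 2 * (1 + ‖ξ‖ ^ 2) ^ s) volume

/-- The quadratic form `q_ε(u) = ∫ |û(ξ)|² g(|ξ|) dξ` (for a fixed symbol `g`). -/
def qeps {d : ℕ} {s : ℝ} (g : ℝ → ℝ) (u : HsFn d s) : ℝ :=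
  ∫ ξ : Rd d, ‖u.ft ξ‖ ^ 2 * g ‖ξ‖

/-- The `L^p` norm (as a real number). -/
def LpN {d : ℕ} (p : ℝ) (f : Rd d → ℂ) : ℝ :=
  (eLpNorm f (ENNReal.ofReal p) volume).toReal

/-- The set of values of the Rayleigh quotient `q_ε(u)/‖u‖_p²` over nonzero
`u ∈ H^s` satisfying the symmetry constraint `P`. -/
def RayleighSet (d : ℕ) (s p : ℝ) (g : ℝ → ℝ) (P : (Rd d → ℂ) → Prop) : Set ℝ :=
  {t | ∃ u : HsFn d s, P u.toFun ∧ ¬ u.toFun =ᵐ[volume] (fun _ => (0 : ℂ)) ∧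
      MemLp u.toFun (ENNReal.ofReal p) volume ∧
      t = qeps g u / LpN p u.toFun ^ 2}

/-- The Rayleigh quotient infimum. -/
def Rayleigh (d : ℕ) (s p : ℝ) (g : ℝ → ℝ) (P : (Rd d → ℂ) → Prop) : ℝ :=
  sInf (RayleighSet d s p g P)

/-- The Rayleigh quotient infimum is attained. -/
def Attained (d : ℕ) (s p : ℝ) (g : ℝ → ℝ) (P : (Rd d → ℂ) → Prop) : Prop :=
  ∃ u : HsFn d s, P u.toFun ∧ ¬ u.toFun =ᵐ[volume] (fun _ => (0 : ℂ)) ∧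
      MemLp u.toFun (ENNReal.ofReal p) volume ∧
      qeps g u / LpN p u.toFun ^ 2 = Rayleigh d s p g P

/-- A radial function. -/
def Radial {d : ℕ} (f : Rd d → ℂ) : Prop := ∀ x y : Rd d, ‖x‖ = ‖y‖ → f x = f y

/-- The squared norm of the first block of coordinates (the first `d - k` ones),
under the identification `ℝ^d = ℝ^{d-k} × ℝ^k`. -/
def blockSq (d k : ℕ) (x : Rd d) : ℝ := ∑ i : Fin d, if (i : ℕ) < d - k then x i ^ 2 else 0

/-- A `G_k = O(d-k) × O(k)`-symmetric function: it depends only on the norms of the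
two blocks of coordinates. -/
def GkSymmetric (d k : ℕ) (f : Rd d → ℂ) : Prop :=
  ∀ x y : Rd d, blockSq d k x = blockSq d k y → ‖x‖ = ‖y‖ → f x = f y

/-- An `(s,γ)`-admissible family of symbols, with admissibility constants `c, C`. -/
def IsAdmissible (s γ c C : ℝ) (g : ℝ → ℝ → ℝ) : Prop :=
  (∀ ε ∈ Set.Ioo (0:ℝ) 1, Measurable (g ε)) ∧
  (∀ ε ∈ Set.Ioo (0:ℝ) 1, ∀ r : ℝ, 0 < g ε r) ∧
  (∀ ε ∈ Set.Ioo (0:ℝ) 1, ∀ r : ℝ, 1/2 ≤ |r - 1| →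
      c * (1 + |r| ^ (2*s)) ≤ g ε r ∧ g ε r ≤ C * (1 + |r| ^ (2*s))) ∧
  (∀ ε ∈ Set.Ioo (0:ℝ) 1, ∀ r : ℝ, |r - 1| ≤ 1/2 →
      c * (ε + |r - 1| ^ γ) ≤ g ε r ∧ g ε r ≤ C * (ε + |r - 1| ^ γ))

/-- The `G_k`-symmetric Stein–Tomas exponent `2_⋆^k`. -/
def twoStarK (d k : ℕ) : ℝ :=
  2 * ((d : ℝ) + (min k (d - k) : ℕ)) / ((d : ℝ) - 2 + (min k (d - k) : ℕ))

/-- The interpolation parameter `α_k`. -/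
def alphaK (d k : ℕ) (p : ℝ) : ℝ := (1/2 - 1/p) / (1/2 - 1/twoStarK d k)

/-- The spherical shell `A_{ε,δ}` around the unit sphere (with `I_{ε,δ}` scale `ε^{1/γ}`). -/
def Aset (d : ℕ) (γ ε δ : ℝ) : Set (Rd d) :=
  {ξ | δ * ε ^ (1/γ) ≤ |‖ξ‖ - 1| ∧ |‖ξ‖ - 1| ≤ δ⁻¹ * ε ^ (1/γ)}

/-- The Knapp-type `G_k`-symmetric trial function on the Fourier side:
`V(ξ) = 1_{||ξ|-1| ≤ m} · 1_{C^k_δ}(ξ/|ξ|) · a(||ξ|-1|)`  (the cap condition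
`|first block of ξ/|ξ|| < δ` being written as `blockSq ξ < δ²|ξ|²`). -/
def knappFT (d k : ℕ) (m δ : ℝ) (a : ℝ → ℝ) : Rd d → ℂ := fun ξ =>
  if |‖ξ‖ - 1| ≤ m ∧ blockSq d k ξ < δ ^ 2 * ‖ξ‖ ^ 2 then ((a |‖ξ‖ - 1| : ℝ) : ℂ) else 0

/-- Polar coordinates on a cone. -/
lemma polar_cone {d : ℕ} (hd : 2 ≤ d) (K : Set (Rd d)) (hK : MeasurableSet K)
    (hcone : ∀ ξ : Rd d, ∀ t : ℝ, 0 < t → (t • ξ ∈ K ↔ ξ ∈ K)) (h : ℝ → ℝ≥0∞) (hh : Measurable h) :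
    ∫⁻ ξ in K, h ‖ξ‖ = (d : ℝ≥0∞) * volume ((K ∩ Metric.ball 0 1) \ {0}) *
      ∫⁻ r in Set.Ioi (0:ℝ), ENNReal.ofReal (r ^ (d - 1)) * h r := by
  have hdim : Module.finrank ℝ (Rd d) = d := by simp
  have : Nontrivial (Rd d) := by
    apply Module.nontrivial_of_finrank_pos (R := ℝ); rw [hdim]; omega
  set S : Set (Metric.sphere (0 : Rd d) 1) := Subtype.val ⁻¹' K with hS
  have hSm : MeasurableSet S := measurable_subtype_coe hK
  have hF : Measurable (fun x : Metric.sphere (0 : Rd d) 1 × Set.Ioi (0:ℝ) =>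
      S.indicator (fun _ => (1 : ℝ≥0∞)) x.1 * h x.2) := by
    apply Measurable.mul
    · exact (measurable_const.indicator hSm).comp measurable_fst
    · exact hh.comp (measurable_subtype_coe.comp measurable_snd)
  have key : ∀ x : ({0}ᶜ : Set (Rd d)), K.indicator (fun ξ => h ‖ξ‖) (x : Rd d) =
      (fun x : Metric.sphere (0 : Rd d) 1 × Set.Ioi (0:ℝ) =>
      S.indicator (fun _ => (1 : ℝ≥0∞)) x.1 * h x.2) (homeomorphUnitSphereProd (Rd d) x) := by
    intro x
    have hx : 0 < ‖(x : Rd d)‖ := norm_pos_iff.2 x.2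
    have h1 : ((homeomorphUnitSphereProd (Rd d) x).1 ∈ S) ↔ (x : Rd d) ∈ K := by
      rw [hS, Set.mem_preimage, homeomorphUnitSphereProd_apply_fst_coe, hcone _ _ (inv_pos.2 hx)]
    by_cases hxK : (x : Rd d) ∈ K
    · simp [Set.indicator_of_mem hxK, Set.indicator_of_mem (h1.2 hxK)]
    · simp [Set.indicator_of_notMem hxK, Set.indicator_of_notMem (fun h => hxK (h1.1 h))]
  calc ∫⁻ ξ in K, h ‖ξ‖ = ∫⁻ ξ, K.indicator (fun ξ => h ‖ξ‖) ξ := by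
        rw [lintegral_indicator hK]
    _ = ∫⁻ ξ in ({0}ᶜ : Set (Rd d)), K.indicator (fun ξ => h ‖ξ‖) ξ := by
        rw [restrict_compl_singleton]
    _ = ∫⁻ x : ({0}ᶜ : Set (Rd d)), K.indicator (fun ξ => h ‖ξ‖) (x : Rd d)
          ∂(Measure.comap Subtype.val volume) := by
        rw [lintegral_subtype_comap (measurableSet_singleton _).compl]
    _ = ∫⁻ x, S.indicator (fun _ => (1 : ℝ≥0∞)) x.1 * h x.2
          ∂((volume : Measure (Rd d)).toSphere.prod
            (Measure.volumeIoiPow (Module.finrank ℝ (Rd d) - 1))) := by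
        rw [← (volume : Measure (Rd d)).measurePreserving_homeomorphUnitSphereProd.lintegral_comp hF]
        exact lintegral_congr key
    _ = (volume : Measure (Rd d)).toSphere S * ∫⁻ r : Set.Ioi (0:ℝ), h r
          ∂(Measure.volumeIoiPow (Module.finrank ℝ (Rd d) - 1)) := by
        rw [lintegral_prod_mul (f := S.indicator (fun _ => (1 : ℝ≥0∞)))
          (g := fun r : Set.Ioi (0:ℝ) => h r) (measurable_const.indicator hSm).aemeasurable
          (hh.comp measurable_subtype_coe).aemeasurable, lintegral_indicator hSm]
        simp
    _ = _ := by
        rw [Measure.toSphere_apply' _ hSm, hdim]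
        congr 1
        · congr 2
          ext x
          simp only [Set.mem_smul, Set.mem_image, Set.mem_sdiff, Set.mem_inter_iff,
            Metric.mem_ball, dist_zero_right, Set.mem_singleton_iff, hS]
          constructor
          · rintro ⟨t, ht, _, ⟨y, hy, rfl⟩, rfl⟩
            have hy1 : ‖(y : Rd d)‖ = 1 := by simp
            refine ⟨⟨(hcone _ _ ht.1).2 hy, ?_⟩, ?_⟩
            · rw [norm_smul, hy1, Real.norm_of_nonneg ht.1.le]; simpa using ht.2
            · intro h0
              have := congrArg norm h0
              rw [norm_smul, hy1, Real.norm_of_nonneg ht.1.le] at this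
              simp at this
              exact ht.1.ne' this
          · rintro ⟨⟨hxK, hx1⟩, hx0⟩
            have hx : 0 < ‖x‖ := norm_pos_iff.2 hx0
            refine ⟨‖x‖, ⟨hx, hx1⟩, ‖x‖⁻¹ • x, ⟨⟨‖x‖⁻¹ • x, ?_⟩, ?_, rfl⟩, ?_⟩
            · simp [norm_smul, hx.ne']
            · exact (hcone _ _ (inv_pos.2 hx)).2 hxK
            · rw [smul_smul, mul_inv_cancel₀ hx.ne', one_smul]
        · rw [Measure.volumeIoiPow, lintegral_withDensity_eq_lintegral_mul _
            (f := fun r : Set.Ioi (0:ℝ) => ENNReal.ofReal (r.1 ^ (d - 1))) (by fun_prop)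
            (g := fun r : Set.Ioi (0:ℝ) => h r) (hh.comp measurable_subtype_coe)]
          exact lintegral_subtype_comap measurableSet_Ioi
            (fun r => ENNReal.ofReal (r ^ (d-1)) * h r)

lemma cone_lower {d : ℕ} (hd : 2 ≤ d) (K : Set (Rd d)) (hK : MeasurableSet K)
    (hcone : ∀ ξ : Rd d, ∀ t : ℝ, 0 < t → (t • ξ ∈ K ↔ ξ ∈ K)) (H : ℝ → ℝ≥0∞) (hH : Measurable H)
    (m : ℝ) (hm : 0 < m) :
    volume ((K ∩ Metric.ball 0 1) \ {0}) * ∫⁻ t in Set.Ioo (0:ℝ) m, H t ≤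
      ∫⁻ ξ in K, (if |‖ξ‖ - 1| ≤ m then H |‖ξ‖ - 1| else 0) := by
  have hh : Measurable (fun r : ℝ => if |r - 1| ≤ m then H |r - 1| else 0) := by
    refine Measurable.ite ?_ (hH.comp (by fun_prop)) measurable_const
    exact measurableSet_le (by fun_prop) measurable_const
  rw [polar_cone hd K hK hcone _ hh]
  have h1 : ∫⁻ t in Set.Ioo (0:ℝ) m, H t ≤ ∫⁻ r in Set.Ioi (0:ℝ),
      ENNReal.ofReal (r ^ (d - 1)) * (if |r - 1| ≤ m then H |r - 1| else 0) := by
    have e : ∫⁻ t in Set.Ioo (0:ℝ) m, H t = ∫⁻ r in Set.Ioo (1:ℝ) (1+m), H (r - 1) := by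
      rw [← lintegral_indicator measurableSet_Ioo, ← lintegral_indicator measurableSet_Ioo,
        ← lintegral_sub_right_eq_self _ (1:ℝ)]
      congr 1; ext r
      simp only [Set.indicator_apply, Set.mem_Ioo]
      congr 1
      simp [sub_lt_iff_lt_add']
    rw [e]
    calc _ ≤ ∫⁻ r in Set.Ioo (1:ℝ) (1+m),
        ENNReal.ofReal (r ^ (d - 1)) * (if |r - 1| ≤ m then H |r - 1| else 0) := by
          apply setLIntegral_mono' measurableSet_Ioo
          intro r hr
          have : |r - 1| = r - 1 := abs_of_pos (by linarith [hr.1])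
          rw [this, if_pos (by linarith [hr.2])]
          have h2 : (1 : ℝ≥0∞) ≤ ENNReal.ofReal (r ^ (d-1)) := by
            rw [← ENNReal.ofReal_one]
            exact ENNReal.ofReal_le_ofReal (one_le_pow₀ hr.1.le)
          calc H (r-1) = 1 * H (r-1) := (one_mul _).symm
            _ ≤ _ := by gcongr
      _ ≤ _ := by
          apply lintegral_mono_set
          intro r hr
          exact lt_trans one_pos hr.1
  have h2 : (1:ℝ≥0∞) ≤ d := by exact_mod_cast (by omega : 1 ≤ d)
  calc _ = 1 * volume ((K ∩ Metric.ball 0 1) \ {0}) * ∫⁻ t in Set.Ioo (0:ℝ) m, H t := by rw [one_mul]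
    _ ≤ _ := by gcongr

lemma cone_upper {d : ℕ} (hd : 2 ≤ d) (K : Set (Rd d)) (hK : MeasurableSet K)
    (hcone : ∀ ξ : Rd d, ∀ t : ℝ, 0 < t → (t • ξ ∈ K ↔ ξ ∈ K)) (H : ℝ → ℝ≥0∞) (hH : Measurable H)
    (m : ℝ) (hm : 0 < m) (hm1 : m ≤ 1/2) :
      ∫⁻ ξ in K, (if |‖ξ‖ - 1| ≤ m then H |‖ξ‖ - 1| else 0) ≤
    (d : ℝ≥0∞) * volume ((K ∩ Metric.ball 0 1) \ {0}) *
      (ENNReal.ofReal (2 ^ d) * (∫⁻ t in Set.Ioo (0:ℝ) m, H t)) := by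
  have hh : Measurable (fun r : ℝ => if |r - 1| ≤ m then H |r - 1| else 0) := by
    refine Measurable.ite ?_ (hH.comp (by fun_prop)) measurable_const
    exact measurableSet_le (by fun_prop) measurable_const
  rw [polar_cone hd K hK hcone _ hh]
  gcongr
  have e1 : ∫⁻ r in Set.Icc (1:ℝ) (1+m), H |r - 1| = ∫⁻ t in Set.Ioo (0:ℝ) m, H t := by
    rw [← setLIntegral_congr (Ioo_ae_eq_Icc (a := (1:ℝ)) (b := 1 + m)),
      ← lintegral_indicator measurableSet_Ioo, ← lintegral_indicator measurableSet_Ioo,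
      ← lintegral_sub_right_eq_self ((Set.Ioo 0 m).indicator H) (1:ℝ)]
    congr 1; ext r
    simp only [Set.indicator_apply, Set.mem_Ioo]
    by_cases hr : 1 < r ∧ r < 1 + m
    · rw [if_pos hr, if_pos ⟨by linarith, by linarith⟩, abs_of_pos (by linarith)]
    · rw [if_neg hr, if_neg (fun h => hr ⟨by linarith [h.1], by linarith [h.2]⟩)]
  have e2 : ∫⁻ r in Set.Icc (1-m:ℝ) 1, H |r - 1| = ∫⁻ t in Set.Ioo (0:ℝ) m, H t := by
    rw [← setLIntegral_congr (Ioo_ae_eq_Icc (a := (1-m:ℝ)) (b := 1)),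
      ← lintegral_indicator measurableSet_Ioo, ← lintegral_indicator measurableSet_Ioo,
      ← lintegral_sub_left_eq_self ((Set.Ioo 0 m).indicator H) (1:ℝ)]
    congr 1; ext r
    simp only [Set.indicator_apply, Set.mem_Ioo]
    by_cases hr : 1 - m < r ∧ r < 1
    · rw [if_pos hr, if_pos ⟨by linarith, by linarith⟩, abs_of_neg (by linarith), neg_sub]
    · rw [if_neg hr, if_neg (fun h => hr ⟨by linarith [h.2], by linarith [h.1]⟩)]
  have e3 : ∀ r : ℝ, ENNReal.ofReal (r ^ (d - 1)) * (if |r - 1| ≤ m then H |r - 1| else 0) ≤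
      (Set.Icc (1-m:ℝ) 1 ∪ Set.Icc (1:ℝ) (1+m)).indicator
        (fun r => ENNReal.ofReal (2 ^ (d-1)) * H |r-1|) r := by
    intro r
    split_ifs with hr
    · have hr' := abs_le.1 hr
      rw [Set.indicator_of_mem]
      · gcongr
        · linarith
        · linarith
      · rcases le_total r 1 with h | h
        · left; exact ⟨by linarith, h⟩
        · right; exact ⟨h, by linarith⟩
    · simp
  calc _ ≤ ∫⁻ r, ENNReal.ofReal (r ^ (d - 1)) * (if |r - 1| ≤ m then H |r - 1| else 0) :=
        setLIntegral_le_lintegral _ _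
    _ ≤ ∫⁻ r in (Set.Icc (1-m:ℝ) 1 ∪ Set.Icc (1:ℝ) (1+m)), ENNReal.ofReal (2 ^ (d-1)) * H |r-1| := by
        rw [← lintegral_indicator (measurableSet_Icc.union measurableSet_Icc)]
        exact lintegral_mono e3
    _ ≤ _ := lintegral_union_le _ _ _
    _ = _ := by
        have hm' : Measurable fun r : ℝ => H |r - 1| := hH.comp (by fun_prop)
        rw [lintegral_const_mul _ hm', lintegral_const_mul _ hm', e1, e2, ← two_mul, ← mul_assoc]
        congr 1
        rw [← ENNReal.ofReal_ofNat, ← ENNReal.ofReal_mul (by norm_num), ← pow_succ']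
        congr 2; omega
/-- The anisotropic Gaussian weight. -/
def gw {d : ℕ} (b : Fin d → ℝ) (x : Rd d) : ℝ := Real.exp (-∑ i, b i * x i ^ 2)

/-- Its Fourier transform. -/
def gW {d : ℕ} (b : Fin d → ℝ) (ζ : Rd d) : ℝ :=
  ∏ i, (π / b i) ^ (1/2 : ℝ) * Real.exp (-(π ^ 2 * ζ i ^ 2 / b i))

lemma gw_fourier {d : ℕ} (b : Fin d → ℝ) (hb : ∀ i, 0 < b i) (ζ : Rd d) :
    ∫ x : Rd d, (gw b x : ℂ) * Complex.exp ((2 * π * ⟪ζ, x⟫ : ℝ) * Complex.I) = (gW b ζ : ℂ) := by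
  rw [← (PiLp.volume_preserving_toLp (Fin d)).integral_comp
    (MeasurableEquiv.toLp 2 (Fin d → ℝ)).measurableEmbedding]
  have h := GaussianFourier.integral_cexp_neg_sum_mul_add (b := fun i => (b i : ℂ))
    (fun i => by simpa using hb i) (fun i => (2 * π * ζ i : ℝ) * Complex.I)
  convert h using 1
  · congr 1; ext x
    simp only [gw, Complex.ofReal_exp, ← Complex.exp_add]
    congr 1
    simp only [PiLp.inner_apply, RCLike.inner_apply, conj_trivial]
    push_cast
    rw [Finset.mul_sum, Finset.sum_mul]
    congr 1
    apply Finset.sum_congr rfl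
    intros; ring
  · simp only [gW]
    push_cast
    apply Finset.prod_congr rfl
    intro i _
    congr 1
    · rw [← Complex.ofReal_div, Complex.ofReal_cpow (by have := hb i; positivity)]
      norm_num
    · congr 1
      have : (b i : ℂ) ≠ 0 := by exact_mod_cast (hb i).ne'
      field_simp
      rw [Complex.I_sq]; ring

lemma gw_integrable {d : ℕ} (b : Fin d → ℝ) (hb : ∀ i, 0 < b i) : Integrable (gw b) := by
  have h := GaussianFourier.integrable_cexp_neg_sum_mul_add (b := fun i => (b i : ℂ))
    (fun i => by simpa using hb i) (fun i => 0)
  rw [← (PiLp.volume_preserving_toLp (Fin d)).integrable_comp_emb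
    (MeasurableEquiv.toLp 2 (Fin d → ℝ)).measurableEmbedding]
  have h2 := h.norm
  refine h2.congr (ae_of_all _ fun x => ?_)
  simp only [gw, Complex.norm_exp, Function.comp]
  congr 1
  simp
  apply Finset.sum_congr rfl
  intros
  norm_cast

lemma gw_integral {d : ℕ} (b : Fin d → ℝ) (hb : ∀ i, 0 < b i) :
    ∫ x, gw b x = ∏ i, (π / b i) ^ (1/2 : ℝ) := by
  have := gw_fourier b hb 0
  simp [gW] at this
  rw [integral_complex_ofReal] at this
  simpa using (by exact_mod_cast this : ∫ x, gw b x = _)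

lemma fourier_quad {d : ℕ} (b : Fin d → ℝ) (hb : ∀ i, 0 < b i) (f : Rd d → ℝ) (hf : Integrable f) :
    ∫ x : Rd d, ‖𝓕⁻ (fun ξ => (f ξ : ℂ)) x‖ ^ 2 * gw b x =
      ∫ z : Rd d × Rd d, f z.1 * f z.2 * gW b (z.1 - z.2) := by
  have hgi := gw_integrable b hb
  have e1 : ∀ x : Rd d, ((‖𝓕⁻ (fun ξ => (f ξ : ℂ)) x‖ ^ 2 * gw b x : ℝ) : ℂ) =
      ∫ z : Rd d × Rd d, ((f z.1 : ℂ) * f z.2) *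
        ((gw b x : ℂ) * Complex.exp ((2 * π * ⟪z.1 - z.2, x⟫ : ℝ) * Complex.I)) := by
    intro x
    have h1 : ((‖𝓕⁻ (fun ξ => (f ξ : ℂ)) x‖ ^ 2 : ℝ) : ℂ) =
      (∫ ξ, Complex.exp ((2 * π * ⟪ξ, x⟫ : ℝ) * Complex.I) * f ξ) *
      (∫ ξ, Complex.exp (-((2 * π * ⟪ξ, x⟫ : ℝ) * Complex.I)) * f ξ) := by
      rw [Complex.ofReal_pow, ← Complex.mul_conj', Real.fourierInv_eq', ← integral_conj]
      congr 1
      apply integral_congr_ae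
      refine ae_of_all _ fun ξ => ?_
      simp only [smul_eq_mul, map_mul, ← Complex.exp_conj, Complex.conj_ofReal, Complex.conj_I]
      simp
    rw [Complex.ofReal_mul, h1, ← integral_prod_mul, ← integral_mul_const]
    apply integral_congr_ae
    refine ae_of_all _ fun z => ?_
    simp only
    have : Complex.exp ((2 * π * ⟪z.1 - z.2, x⟫ : ℝ) * Complex.I) =
        Complex.exp ((2 * π * ⟪z.1, x⟫ : ℝ) * Complex.I) *
        Complex.exp (-((2 * π * ⟪z.2, x⟫ : ℝ) * Complex.I)) := by
      rw [← Complex.exp_add, inner_sub_left]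
      congr 1
      push_cast; ring
    rw [this]; ring
  have key : ((∫ x : Rd d, ‖𝓕⁻ (fun ξ => (f ξ : ℂ)) x‖ ^ 2 * gw b x : ℝ) : ℂ) =
      ((∫ z : Rd d × Rd d, f z.1 * f z.2 * gW b (z.1 - z.2) : ℝ) : ℂ) := by
    rw [← integral_complex_ofReal, ← integral_complex_ofReal]
    simp_rw [e1]
    rw [integral_integral_swap]
    · congr 1; ext z
      rw [integral_const_mul, gw_fourier b hb]
      push_cast; ring
    · have hff : Integrable (fun z : Rd d × Rd d => (f z.1 : ℂ) * f z.2) :=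
        hf.ofReal.mul_prod hf.ofReal
      have h3 : Integrable (fun q : Rd d × (Rd d × Rd d) => ((gw b q.1 : ℂ)) * ((f q.2.1 : ℂ) * f q.2.2))
        (volume.prod volume) := hgi.ofReal.mul_prod hff
      have h4 : Continuous (fun q : Rd d × (Rd d × Rd d) =>
        Complex.exp ((2 * π * ⟪q.2.1 - q.2.2, q.1⟫ : ℝ) * Complex.I)) := by fun_prop
      have h5 := h3.bdd_mul (c := 1) h4.aestronglyMeasurable (ae_of_all _ fun q => by
        rw [Complex.norm_exp_ofReal_mul_I])
      refine h5.congr (ae_of_all _ fun q => ?_)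
      simp only [Function.uncurry]
      ring
  exact_mod_cast key
lemma prod_scale (d k : ℕ) (hk : k ≤ d) (x y : ℝ) :
    ∏ i : Fin d, (if (i : ℕ) < d - k then x else y) = x ^ (d - k) * y ^ k := by
  rw [Fin.prod_univ_eq_prod_range (fun i => if i < d - k then x else y) d]
  obtain ⟨j, rfl⟩ := Nat.exists_eq_add_of_le hk
  have : k + j - k = j := by omega
  rw [this, Nat.add_comm, Finset.prod_range_add]
  congr 1
  · rw [Finset.prod_congr rfl (fun i hi => if_pos (Finset.mem_range.1 hi))]; simp
  · rw [Finset.prod_congr rfl (fun i hi => if_neg (by omega))]; simp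

/-- The cap cone. -/
def Kcone (d k : ℕ) (δ : ℝ) : Set (Rd d) := {ξ | blockSq d k ξ < δ ^ 2 * ‖ξ‖ ^ 2}

/-- The smaller cone. -/
def Scone (d k : ℕ) (δ : ℝ) (L : Fin d) : Set (Rd d) :=
  {ξ | blockSq d k ξ < δ ^ 2 * ‖ξ‖ ^ 2 ∧ ‖ξ‖ ≤ 2 * ξ L}

lemma continuous_blockSq (d k : ℕ) : Continuous (blockSq d k) := by
  unfold blockSq
  refine continuous_finsetSum _ fun i _ => ?_
  split_ifs <;> fun_prop

lemma blockSq_smul (d k : ℕ) (t : ℝ) (ξ : Rd d) : blockSq d k (t • ξ) = t ^ 2 * blockSq d k ξ := by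
  unfold blockSq
  rw [Finset.mul_sum]
  refine Finset.sum_congr rfl fun i _ => ?_
  split_ifs <;> simp [mul_pow]

lemma Kcone_meas (d k : ℕ) (δ : ℝ) : MeasurableSet (Kcone d k δ) :=
  measurableSet_lt (continuous_blockSq d k).measurable (by fun_prop)

lemma Scone_meas (d k : ℕ) (δ : ℝ) (L : Fin d) : MeasurableSet (Scone d k δ L) :=
  (Kcone_meas d k δ).inter
    (measurableSet_le (f := fun ξ : Rd d => ‖ξ‖) (g := fun ξ : Rd d => 2 * ξ L)
      (by fun_prop) (by fun_prop))

lemma Kcone_cone (d k : ℕ) (δ : ℝ) (ξ : Rd d) (t : ℝ) (ht : 0 < t) :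
    t • ξ ∈ Kcone d k δ ↔ ξ ∈ Kcone d k δ := by
  simp only [Kcone, Set.mem_ofPred_eq, blockSq_smul, norm_smul, Real.norm_of_nonneg ht.le, mul_pow]
  rw [mul_left_comm]
  exact mul_lt_mul_iff_right₀ (by positivity)

lemma Scone_cone (d k : ℕ) (δ : ℝ) (L : Fin d) (ξ : Rd d) (t : ℝ) (ht : 0 < t) :
    t • ξ ∈ Scone d k δ L ↔ ξ ∈ Scone d k δ L := by
  have h1 := Kcone_cone d k δ ξ t ht
  simp only [Kcone, Set.mem_ofPred_eq] at h1
  simp only [Scone, Set.mem_ofPred_eq, h1]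
  refine and_congr_right fun _ => ?_
  rw [norm_smul, Real.norm_of_nonneg ht.le]
  simp only [PiLp.smul_apply, smul_eq_mul]
  rw [mul_left_comm]
  exact mul_le_mul_iff_right₀ ht

lemma vol_preimage_Icc {d : ℕ} (a b : Fin d → ℝ) :
    volume {ξ : Rd d | ∀ i, a i ≤ ξ i ∧ ξ i ≤ b i} = ∏ i, ENNReal.ofReal (b i - a i) := by
  rw [← Real.volume_Icc_pi, ← (PiLp.volume_preserving_ofLp (Fin d)).measure_preimage
    measurableSet_Icc.nullMeasurableSet]
  congr 1
  ext ξ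
  simp [Set.mem_Icc, Pi.le_def, forall_and]

lemma norm_sq_sum {d : ℕ} (ξ : Rd d) : ‖ξ‖ ^ 2 = ∑ i, ξ i ^ 2 := by
  rw [EuclideanSpace.norm_sq_eq]; simp

lemma coord_sq_le {d : ℕ} (ξ : Rd d) (i : Fin d) : ξ i ^ 2 ≤ ‖ξ‖ ^ 2 := by
  rw [norm_sq_sum]
  exact Finset.single_le_sum (f := fun i => ξ i ^ 2) (fun i _ => sq_nonneg _) (Finset.mem_univ i)

lemma coord_sq_le_block {d k : ℕ} (ξ : Rd d) (i : Fin d) (hi : (i : ℕ) < d - k) :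
    ξ i ^ 2 ≤ blockSq d k ξ := by
  have := Finset.single_le_sum (f := fun i : Fin d => if (i : ℕ) < d - k then ξ i ^ 2 else 0)
    (fun i _ => by split_ifs <;> positivity) (Finset.mem_univ i)
  simpa [hi, blockSq] using this

lemma vol_lower (d k : ℕ) (hd : 2 ≤ d) (hk1 : 1 ≤ k) (hkd : k ≤ d) (δ : ℝ) (hδ : 0 < δ)
    (hδ1 : δ ≤ 1) (L : Fin d) (hL : (L : ℕ) = d - 1) :
    ENNReal.ofReal ((1 / (8 * d)) ^ d * δ ^ (d - k)) ≤
      volume ((Scone d k δ L ∩ Metric.ball 0 1) \ {0}) := by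
  have hd' : (2:ℝ) ≤ d := by exact_mod_cast hd
  have hd0 : (0:ℝ) < d := by linarith
  set τ : ℝ := 1 / (8 * d) with hτ
  have hτ0 : 0 < τ := by positivity
  have hτd : d * τ ^ 2 ≤ 1 / 64 := by
    rw [hτ, div_pow, one_pow, mul_one_div, div_le_div_iff₀ (by positivity) (by norm_num)]
    nlinarith
  have hτ1 : τ ≤ 1/16 := by
    rw [hτ]; apply one_div_le_one_div_of_le <;> linarith
  set σ : Fin d → ℝ := fun i => if (i : ℕ) < d - k then δ else 1 with hσ
  have hσ0 : ∀ i, 0 < σ i := fun i => by simp only [hσ]; split_ifs <;> linarith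
  have hσ1 : ∀ i, σ i ≤ 1 := fun i => by simp only [hσ]; split_ifs <;> linarith
  have hLk : ¬ (L : ℕ) < d - k := by omega
  have hvol := vol_preimage_Icc (d := d) (fun i => if i = L then 1/4 else 0)
    (fun i => (if i = L then 1/4 else 0) + τ * σ i)
  simp only [add_sub_cancel_left] at hvol
  rw [← ENNReal.ofReal_prod_of_nonneg (fun i _ => by have := hσ0 i; positivity),
    Finset.prod_mul_distrib, prod_scale d k hkd] at hvol
  simp only [Finset.prod_const, Finset.card_univ, Fintype.card_fin, one_pow, mul_one] at hvol
  rw [← hvol]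
  apply measure_mono
  intro ξ hξ
  have hξL := hξ L
  simp only [if_true] at hξL
  have hσL : σ L = 1 := by simp [hσ, hLk]
  rw [hσL] at hξL
  have hother : ∀ i, i ≠ L → ξ i ^ 2 ≤ (τ * σ i) ^ 2 := by
    intro i hi
    have := hξ i
    simp only [hi, if_false, zero_add] at this
    exact pow_le_pow_left₀ this.1 this.2 2
  have hnle : ‖ξ‖ ^ 2 ≤ ξ L ^ 2 + d * τ ^ 2 := by
    rw [norm_sq_sum]
    calc ∑ i, ξ i ^ 2 ≤ ∑ i, ((if i = L then ξ L ^ 2 else 0) + τ ^ 2) := by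
          apply Finset.sum_le_sum
          intro i _
          by_cases h : i = L
          · simp [h]; positivity
          · simp only [h, if_false, zero_add]
            refine (hother i h).trans ?_
            have := hσ0 i
            exact pow_le_pow_left₀ (by positivity) (mul_le_of_le_one_right hτ0.le (hσ1 i)) 2
      _ = _ := by rw [Finset.sum_add_distrib]; simp
  have hbl : blockSq d k ξ ≤ d * τ ^ 2 * δ ^ 2 := by
    unfold blockSq
    calc _ ≤ ∑ i : Fin d, τ ^ 2 * δ ^ 2 := by
          apply Finset.sum_le_sum
          intro i _
          split_ifs with h
          · have hi : i ≠ L := fun h' => hLk (h' ▸ h)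
            have := hother i hi
            simp only [hσ, h, if_true, mul_pow] at this
            exact this
          · positivity
      _ = _ := by simp; ring
  have hge := coord_sq_le ξ L
  have hn0 : 0 < ‖ξ‖ := by
    by_contra h
    have : ‖ξ‖ = 0 := le_antisymm (not_lt.1 h) (norm_nonneg _)
    rw [this] at hge
    nlinarith
  refine ⟨⟨⟨?_, ?_⟩, ?_⟩, ?_⟩
  · have h2 : 0 < δ ^ 2 := by positivity
    have h3 : 1/16 ≤ ‖ξ‖ ^ 2 := by nlinarith
    nlinarith
  · apply le_of_sq_le_sq _ (by linarith)
    nlinarith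
  · rw [Metric.mem_ball, dist_zero_right]
    have : ‖ξ‖ ^ 2 < 1 := by nlinarith
    nlinarith
  · intro h
    rw [Set.mem_singleton_iff] at h
    rw [h, norm_zero] at hn0
    exact lt_irrefl _ hn0

lemma vol_upper (d k : ℕ) (hkd : k ≤ d) (δ : ℝ) (hδ : 0 < δ) :
    volume ((Kcone d k δ ∩ Metric.ball 0 1) \ {0}) ≤ ENNReal.ofReal (2 ^ d * δ ^ (d - k)) := by
  have hvol := vol_preimage_Icc (d := d) (fun i => - (if (i : ℕ) < d - k then δ else 1))
    (fun i => if (i : ℕ) < d - k then δ else 1)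
  simp only [sub_neg_eq_add, ← two_mul] at hvol
  rw [← ENNReal.ofReal_prod_of_nonneg (fun i _ => by split_ifs <;> positivity),
    Finset.prod_mul_distrib, prod_scale d k hkd] at hvol
  simp only [Finset.prod_const, Finset.card_univ, Fintype.card_fin, one_pow, mul_one] at hvol
  rw [← hvol]
  apply measure_mono
  rintro ξ ⟨⟨h1, h2⟩, -⟩
  rw [Metric.mem_ball, dist_zero_right] at h2
  have h1' : blockSq d k ξ < δ ^ 2 * ‖ξ‖ ^ 2 := h1
  have h3 : ‖ξ‖ ^ 2 ≤ 1 := pow_le_one₀ (norm_nonneg _) h2.le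
  intro i
  rw [← abs_le]
  split_ifs with hi
  · apply abs_le_of_sq_le_sq _ hδ.le
    have := coord_sq_le_block ξ i hi
    have h4 : 0 < δ ^ 2 := by positivity
    nlinarith
  · apply abs_le_of_sq_le_sq _ zero_le_one
    linarith [coord_sq_le ξ i]

lemma mass_bounds (d k : ℕ) (hd : 2 ≤ d) (hk1 : 1 ≤ k) (hkd : k ≤ d) (δ m : ℝ) (hδ : 0 < δ)
    (hδ1 : δ ≤ 1) (hm : 0 < m) (hm1 : m ≤ 1/2) (L : Fin d) (hL : (L : ℕ) = d - 1)
    (H : ℝ → ℝ) (hH : Measurable H) (hH0 : ∀ t, 0 ≤ t → 0 ≤ H t) (hHi : IntegrableOn H (Set.Ioo 0 m))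
    (F : Rd d → ℝ) (hF : Measurable F) (hF0 : ∀ ξ, 0 ≤ F ξ) (α β : ℝ) (hα : 0 ≤ α) (hβ : 0 ≤ β)
    (hlo : ∀ ξ ∈ Kcone d k δ, |‖ξ‖ - 1| ≤ m → α * H |‖ξ‖ - 1| ≤ F ξ)
    (hup : ∀ ξ ∈ Kcone d k δ, |‖ξ‖ - 1| ≤ m → F ξ ≤ β * H |‖ξ‖ - 1|)
    (hz : ∀ ξ, ¬ (|‖ξ‖ - 1| ≤ m ∧ ξ ∈ Kcone d k δ) → F ξ = 0) :
    Integrable F ∧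
    (1 / (8 * d)) ^ d * α * δ ^ (d - k) * (∫ t in Set.Ioo 0 m, H t) ≤ ∫ ξ in Scone d k δ L, F ξ ∧
    ∫ ξ, F ξ ≤ d * 2 ^ d * 2 ^ d * β * δ ^ (d - k) * (∫ t in Set.Ioo 0 m, H t) := by
  have hHnn : 0 ≤ ∫ t in Set.Ioo 0 m, H t :=
    setIntegral_nonneg measurableSet_Ioo fun t ht => hH0 t ht.1.le
  have hHl : ∫⁻ t in Set.Ioo 0 m, ENNReal.ofReal (H t) = ENNReal.ofReal (∫ t in Set.Ioo 0 m, H t) := by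
    rw [ofReal_integral_eq_lintegral_ofReal hHi]
    exact (ae_restrict_iff' measurableSet_Ioo).2 (ae_of_all _ fun t ht => hH0 t ht.1.le)
  have hHm : Measurable fun t => ENNReal.ofReal (H t) := hH.ennreal_ofReal
  have up : ∫⁻ ξ, ENNReal.ofReal (F ξ) ≤
      ENNReal.ofReal (d * 2 ^ d * 2 ^ d * β * δ ^ (d - k) * (∫ t in Set.Ioo 0 m, H t)) := by
    calc ∫⁻ ξ, ENNReal.ofReal (F ξ) ≤ ∫⁻ ξ in Kcone d k δ, ENNReal.ofReal β *
          (if |‖ξ‖ - 1| ≤ m then ENNReal.ofReal (H |‖ξ‖ - 1|) else 0) := by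
          rw [← lintegral_indicator (Kcone_meas d k δ)]
          apply lintegral_mono
          intro ξ
          by_cases h : |‖ξ‖ - 1| ≤ m ∧ ξ ∈ Kcone d k δ
          · rw [Set.indicator_of_mem h.2, if_pos h.1, ← ENNReal.ofReal_mul hβ]
            exact ENNReal.ofReal_le_ofReal (hup ξ h.2 h.1)
          · simp [hz ξ h]
      _ = ENNReal.ofReal β * ∫⁻ ξ in Kcone d k δ,
          (if |‖ξ‖ - 1| ≤ m then ENNReal.ofReal (H |‖ξ‖ - 1|) else 0) := by
          rw [lintegral_const_mul' _ _ ENNReal.ofReal_ne_top]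
      _ ≤ ENNReal.ofReal β * ((d : ℝ≥0∞) * ENNReal.ofReal (2 ^ d * δ ^ (d - k)) *
      (ENNReal.ofReal (2 ^ d) * (∫⁻ t in Set.Ioo (0:ℝ) m, ENNReal.ofReal (H t)))) := by
          gcongr
          refine (cone_upper hd _ (Kcone_meas d k δ) (Kcone_cone d k δ) _ hHm m hm hm1).trans ?_
          gcongr
          exact vol_upper d k hkd δ hδ
      _ = _ := by
          rw [hHl, ← ENNReal.ofReal_natCast, ← ENNReal.ofReal_mul (by positivity),
            ← ENNReal.ofReal_mul (by positivity), ← ENNReal.ofReal_mul (by positivity),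
            ← ENNReal.ofReal_mul (by positivity)]
          congr 1; ring
  have hFi : Integrable F := by
    refine ⟨hF.aestronglyMeasurable, ?_⟩
    rw [hasFiniteIntegral_iff_ofReal (ae_of_all _ hF0)]
    exact up.trans_lt ENNReal.ofReal_lt_top
  refine ⟨hFi, ?_, ?_⟩
  · rw [← ENNReal.ofReal_le_ofReal_iff (integral_nonneg hF0),
      ofReal_integral_eq_lintegral_ofReal hFi.integrableOn (ae_of_all _ hF0)]
    calc _ = ENNReal.ofReal α * (ENNReal.ofReal ((1 / (8 * d)) ^ d * δ ^ (d - k)) *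
          ∫⁻ t in Set.Ioo 0 m, ENNReal.ofReal (H t)) := by
          rw [hHl, ← ENNReal.ofReal_mul (by positivity), ← ENNReal.ofReal_mul (by positivity)]
          congr 1; ring
      _ ≤ ENNReal.ofReal α * ∫⁻ ξ in Scone d k δ L,
          (if |‖ξ‖ - 1| ≤ m then ENNReal.ofReal (H |‖ξ‖ - 1|) else 0) := by
          gcongr
          refine le_trans ?_
            (cone_lower hd _ (Scone_meas d k δ L) (Scone_cone d k δ L) _ hHm m hm)
          gcongr
          exact vol_lower d k hd hk1 hkd δ hδ hδ1 L hL
      _ = ∫⁻ ξ in Scone d k δ L, ENNReal.ofReal α *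
          (if |‖ξ‖ - 1| ≤ m then ENNReal.ofReal (H |‖ξ‖ - 1|) else 0) := by
          rw [lintegral_const_mul' _ _ ENNReal.ofReal_ne_top]
      _ ≤ _ := by
          apply setLIntegral_mono' (Scone_meas d k δ L)
          intro ξ hξ
          split_ifs with h
          · rw [← ENNReal.ofReal_mul hα]
            exact ENNReal.ofReal_le_ofReal (hlo ξ hξ.1 h)
          · simp
  · rw [← ENNReal.ofReal_le_ofReal_iff (by positivity),
      ofReal_integral_eq_lintegral_ofReal hFi (ae_of_all _ hF0)]
    exact up
lemma gW_cont {d : ℕ} (b : Fin d → ℝ) : Continuous (gW b) := by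
  unfold gW
  refine continuous_finsetProd _ fun i _ => ?_
  fun_prop

lemma gW_nonneg {d : ℕ} (b : Fin d → ℝ) (hb : ∀ i, 0 < b i) (ζ : Rd d) : 0 ≤ gW b ζ := by
  unfold gW
  refine Finset.prod_nonneg fun i _ => ?_
  have := hb i
  positivity

lemma gW_le {d : ℕ} (b : Fin d → ℝ) (hb : ∀ i, 0 < b i) (ζ : Rd d) :
    gW b ζ ≤ ∏ i, (π / b i) ^ (1/2 : ℝ) := by
  unfold gW
  refine Finset.prod_le_prod (fun i _ => ?_) fun i _ => ?_
  · have := hb i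
    positivity
  · have := hb i
    apply mul_le_of_le_one_right (by positivity)
    rw [Real.exp_le_one_iff]
    have : 0 ≤ π ^ 2 * ζ i ^ 2 / b i := by positivity
    linarith

lemma quad_lower {d : ℕ} (b : Fin d → ℝ) (hb : ∀ i, 0 < b i) (f : Rd d → ℝ) (hf : Integrable f)
    (hf0 : ∀ ξ, 0 ≤ f ξ) (S : Set (Rd d)) (hS : MeasurableSet S) (ϖ : Rd d → (Fin d → ℤ))
    (hϖ : Measurable ϖ) (J : Finset (Fin d → ℤ)) (hJ : ∀ ξ ∈ S, f ξ ≠ 0 → ϖ ξ ∈ J) (ω : ℝ)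
    (hω0 : 0 ≤ ω)
    (hω : ∀ ξ ∈ S, ∀ ξ' ∈ S, f ξ ≠ 0 → f ξ' ≠ 0 → ϖ ξ = ϖ ξ' → ω ≤ gW b (ξ - ξ')) :
    ω * (∫ ξ in S, f ξ) ^ 2 ≤ J.card * ∫ z : Rd d × Rd d, f z.1 * f z.2 * gW b (z.1 - z.2) := by
  classical
  set u : (Fin d → ℤ) → Rd d → ℝ := fun j => (S ∩ ϖ ⁻¹' {j}).indicator f with hu
  have hPm : ∀ j, MeasurableSet (S ∩ ϖ ⁻¹' {j}) := fun j =>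
    hS.inter (hϖ (measurableSet_singleton j))
  have hui : ∀ j, Integrable (u j) := fun j => hf.indicator (hPm j)
  have hsum : ∫ ξ in S, f ξ = ∑ j ∈ J, ∫ ξ, u j ξ := by
    rw [← integral_finsetSum _ (fun j _ => hui j), ← integral_indicator hS]
    congr 1; ext ξ
    by_cases hξ : ξ ∈ S
    · by_cases h0 : f ξ = 0
      · simp [Set.indicator_apply, hu, h0]
      · have hj := hJ ξ hξ h0
        rw [Finset.sum_eq_single_of_mem _ hj]
        · simp [hu, hξ]
        · intro j _ hne
          simp [hu, Set.indicator_apply, hξ, hne.symm]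
    · simp [hu, hξ]
  have hI : Integrable (fun z : Rd d × Rd d => f z.1 * f z.2 * gW b (z.1 - z.2)) := by
    have h1 : Integrable (fun z : Rd d × Rd d => f z.1 * f z.2) := hf.mul_prod hf
    have h2 : Continuous (fun z : Rd d × Rd d => gW b (z.1 - z.2)) := (gW_cont b).comp (by fun_prop)
    have h3 := h1.bdd_mul (c := ∏ i, (π / b i) ^ (1/2 : ℝ)) h2.aestronglyMeasurable
      (ae_of_all _ fun z => by
        rw [Real.norm_of_nonneg (gW_nonneg b hb _)]; exact gW_le b hb _)
    refine h3.congr (ae_of_all _ fun z => ?_)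
    simp only; ring
  have hpt : ∀ z : Rd d × Rd d, ∑ j ∈ J, ω * (u j z.1 * u j z.2) ≤
      f z.1 * f z.2 * gW b (z.1 - z.2) := by
    intro z
    have hnn : 0 ≤ f z.1 * f z.2 * gW b (z.1 - z.2) :=
      mul_nonneg (mul_nonneg (hf0 _) (hf0 _)) (gW_nonneg b hb _)
    by_cases hz : z.1 ∈ S ∧ z.2 ∈ S ∧ ϖ z.1 = ϖ z.2 ∧ f z.1 ≠ 0 ∧ f z.2 ≠ 0
    · obtain ⟨h1, h2, h3, h4, h5⟩ := hz
      rw [Finset.sum_eq_single_of_mem _ (hJ _ h1 h4)]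
      · have e1 : u (ϖ z.1) z.1 = f z.1 := by simp [hu, h1]
        have e2 : u (ϖ z.1) z.2 = f z.2 := by simp [hu, h2, h3]
        rw [e1, e2, mul_comm]
        exact mul_le_mul_of_nonneg_left (hω _ h1 _ h2 h4 h5 h3) (mul_nonneg (hf0 _) (hf0 _))
      · intro j _ hne
        have e1 : u j z.1 = 0 := by simp [hu, Set.indicator_apply, h1, hne.symm]
        rw [e1]; ring
    · refine le_trans (le_of_eq ?_) hnn
      apply Finset.sum_eq_zero
      intro j _
      by_cases h1 : u j z.1 = 0
      · rw [h1]; ring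
      by_cases h2 : u j z.2 = 0
      · rw [h2]; ring
      exfalso
      apply hz
      have m1 : z.1 ∈ S ∩ ϖ ⁻¹' {j} := by
        by_contra h; exact h1 (Set.indicator_of_notMem h _)
      have m2 : z.2 ∈ S ∩ ϖ ⁻¹' {j} := by
        by_contra h; exact h2 (Set.indicator_of_notMem h _)
      simp only [hu, Set.indicator_of_mem m1] at h1
      simp only [hu, Set.indicator_of_mem m2] at h2
      exact ⟨m1.1, m2.1, by rw [m1.2, m2.2], h1, h2⟩
  have hintg : ∑ j ∈ J, ω * (∫ ξ, u j ξ) ^ 2 ≤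
      ∫ z : Rd d × Rd d, f z.1 * f z.2 * gW b (z.1 - z.2) := by
    have hui2 : ∀ j ∈ J, Integrable (fun z : Rd d × Rd d => ω * (u j z.1 * u j z.2)) := fun j _ =>
      ((hui j).mul_prod (hui j)).const_mul ω
    calc ∑ j ∈ J, ω * (∫ ξ, u j ξ) ^ 2 = ∑ j ∈ J, ∫ z : Rd d × Rd d, ω * (u j z.1 * u j z.2) := by
          refine Finset.sum_congr rfl fun j _ => ?_
          rw [integral_const_mul]
          have := integral_prod_mul (μ := (volume : Measure (Rd d))) (ν := (volume : Measure (Rd d)))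
            (u j) (u j)
          rw [← Measure.volume_eq_prod] at this
          rw [this, sq]
      _ = ∫ z : Rd d × Rd d, ∑ j ∈ J, ω * (u j z.1 * u j z.2) := (integral_finsetSum _ hui2).symm
      _ ≤ _ := integral_mono (integrable_finsetSum _ hui2) hI hpt
  calc ω * (∫ ξ in S, f ξ) ^ 2 ≤ ω * (J.card * ∑ j ∈ J, (∫ ξ, u j ξ) ^ 2) := by
        rw [hsum]
        exact mul_le_mul_of_nonneg_left sq_sum_le_card_mul_sum_sq hω0
    _ = J.card * ∑ j ∈ J, ω * (∫ ξ, u j ξ) ^ 2 := by rw [← Finset.mul_sum]; ring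
    _ ≤ _ := by gcongr

lemma holder_upper {d : ℕ} (b : Fin d → ℝ) (hb : ∀ i, 0 < b i) (v : Rd d → ℂ)
    (hv : AEStronglyMeasurable v volume) (p q : ℝ) (hp : 2 < p) (hq : q = p / (p - 2)) :
    ENNReal.ofReal (∫ x, ‖v x‖ ^ 2 * gw b x) ≤ eLpNorm v (ENNReal.ofReal p) volume ^ 2 *
      ENNReal.ofReal ((∏ i, (π / (q * b i)) ^ (1/2 : ℝ)) ^ (1 / q)) := by
  have hp0 : 0 < p := by linarith
  have hq0 : 0 < q := by rw [hq]; apply div_pos <;> linarith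
  have hgw0 : ∀ x, 0 ≤ gw b x := fun x => (Real.exp_pos _).le
  have hgwc : Continuous (gw b) := by unfold gw; fun_prop
  have hconj : (p / 2).HolderConjugate q := by
    rw [Real.holderConjugate_iff]
    refine ⟨by linarith, ?_⟩
    rw [hq]
    have : p - 2 ≠ 0 := by linarith
    field_simp
    ring
  have hms : AEStronglyMeasurable (fun x => ‖v x‖ ^ 2 * gw b x) volume :=
    (hv.norm.pow 2).mul hgwc.aestronglyMeasurable
  have h1 : ENNReal.ofReal (∫ x, ‖v x‖ ^ 2 * gw b x) ≤
      ∫⁻ x, ((fun x => ‖v x‖ₑ ^ 2) * (fun x => ENNReal.ofReal (gw b x))) x := by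
    rw [integral_eq_lintegral_of_nonneg_ae
      (ae_of_all _ fun x => mul_nonneg (by positivity) (hgw0 x)) hms]
    refine ENNReal.ofReal_toReal_le.trans (le_of_eq ?_)
    apply lintegral_congr
    intro x
    rw [ENNReal.ofReal_mul (by positivity), ENNReal.ofReal_pow (by positivity), ofReal_norm]
    rfl
  refine h1.trans ((ENNReal.lintegral_mul_le_Lp_mul_Lq volume hconj (hv.enorm.pow_const 2)
    hgwc.measurable.ennreal_ofReal.aemeasurable).trans (le_of_eq ?_))
  congr 1
  · rw [eLpNorm_eq_lintegral_rpow_enorm_toReal (by simpa using hp0) ENNReal.ofReal_ne_top,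
      ENNReal.toReal_ofReal hp0.le, ← ENNReal.rpow_natCast, ← ENNReal.rpow_mul]
    congr 1
    · apply lintegral_congr
      intro x
      rw [← ENNReal.rpow_natCast, ← ENNReal.rpow_mul]
      congr 1
      push_cast; ring
    · push_cast; field_simp
  · have e : ∀ x, ENNReal.ofReal (gw b x) ^ q = ENNReal.ofReal (gw (fun i => q * b i) x) := by
      intro x
      rw [ENNReal.ofReal_rpow_of_nonneg (hgw0 x) hq0.le]
      congr 1
      unfold gw
      rw [← Real.exp_mul]
      congr 1
      rw [neg_mul, Finset.sum_mul]
      congr 1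
      refine Finset.sum_congr rfl fun i _ => by ring
    have hqb : ∀ i, 0 < q * b i := fun i => mul_pos hq0 (hb i)
    simp_rw [e]
    rw [← ofReal_integral_eq_lintegral_ofReal (gw_integrable _ hqb)
      (ae_of_all _ fun x => (Real.exp_pos _).le), gw_integral _ hqb,
      ENNReal.ofReal_rpow_of_nonneg _ (by positivity)]
    exact Finset.prod_nonneg fun i _ => by have := hqb i; positivity
/-- The Gaussian parameters. -/
def bpar (d k : ℕ) (δ ρ : ℝ) (i : Fin d) : ℝ := if (i : ℕ) < d - k then δ ^ 2 else ρ ^ 2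

/-- The labels of the pieces. -/
def plab (d k : ℕ) (ρ : ℝ) (L : Fin d) (ξ : Rd d) (i : Fin d) : ℤ :=
  if ¬ ((i : ℕ) < d - k) ∧ i ≠ L then ⌊ξ i / ρ⌋ else 0

lemma plab_meas (d k : ℕ) (ρ : ℝ) (L : Fin d) : Measurable (plab d k ρ L) := by
  rw [measurable_pi_iff]
  intro i
  unfold plab
  split_ifs
  · exact Int.measurable_floor.comp (by fun_prop)
  · exact measurable_const

lemma geom_coord (d k : ℕ) (δ m ρ : ℝ) (hδ : 0 < δ) (hm : 0 < m) (hm1 : m ≤ 1/2)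
    (hρ : ρ = δ ^ 2 + m) (L : Fin d) (hLk : ¬ (L : ℕ) < d - k)
    (ξ ξ' : Rd d) (hS : ξ ∈ Scone d k δ L) (hS' : ξ' ∈ Scone d k δ L)
    (hn : |‖ξ‖ - 1| ≤ m) (hn' : |‖ξ'‖ - 1| ≤ m) (hpl : plab d k ρ L ξ = plab d k ρ L ξ') (i : Fin d) :
    (ξ i - ξ' i) ^ 2 ≤ (12 + 6 * d) ^ 2 * bpar d k δ ρ i := by
  have hρ0 : 0 < ρ := by rw [hρ]; positivity
  have hd0 : (0:ℝ) ≤ d := Nat.cast_nonneg d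
  obtain ⟨hn1, hn2⟩ := abs_le.1 hn
  obtain ⟨hn1', hn2'⟩ := abs_le.1 hn'
  have hδ2 : 0 < δ ^ 2 := by positivity
  have low : ∀ ξ ∈ Scone d k δ L, |‖ξ‖ - 1| ≤ m → ∀ i : Fin d, (i : ℕ) < d - k →
      ξ i ^ 2 ≤ δ ^ 2 * (9/4) := by
    intro ξ hS hn i hi
    have h1 := coord_sq_le_block ξ i hi
    have h2 : blockSq d k ξ < δ ^ 2 * ‖ξ‖ ^ 2 := hS.1
    have h3 : ‖ξ‖ ^ 2 ≤ 9/4 := by nlinarith [(abs_le.1 hn).2, norm_nonneg ξ]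
    nlinarith
  have bdd : ∀ ξ : Rd d, |‖ξ‖ - 1| ≤ m → ∀ i : Fin d, |ξ i| ≤ 3/2 := by
    intro ξ hn i
    apply abs_le_of_sq_le_sq _ (by norm_num)
    have := coord_sq_le ξ i
    nlinarith [(abs_le.1 hn).2, norm_nonneg ξ]
  have mid : ∀ i : Fin d, ¬ (i : ℕ) < d - k → i ≠ L → |ξ i - ξ' i| ≤ ρ := by
    intro i h1 h2
    have h3 := congrFun hpl i
    simp only [plab, h1, h2, not_false_eq_true, ne_eq, and_self, if_true] at h3
    have h4 := Int.abs_sub_lt_one_of_floor_eq_floor h3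
    rw [← sub_div, abs_div, abs_of_pos hρ0, div_lt_one hρ0] at h4
    exact h4.le
  unfold bpar
  by_cases hi : (i : ℕ) < d - k
  · rw [if_pos hi]
    have h1 := low ξ hS hn i hi
    have h2 := low ξ' hS' hn' i hi
    have h3 : (ξ i - ξ' i) ^ 2 ≤ 9 * δ ^ 2 := by nlinarith [sq_nonneg (ξ i + ξ' i)]
    have h4 : (9:ℝ) ≤ (12 + 6 * d) ^ 2 := by
      have hd0 : (0:ℝ) ≤ d := Nat.cast_nonneg d
      nlinarith
    exact h3.trans (mul_le_mul_of_nonneg_right h4 (sq_nonneg δ))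
  rw [if_neg hi]
  by_cases hiL : i = L
  · subst hiL
    have hdiff : ∀ j ∈ Finset.univ.erase i, |ξ j ^ 2 - ξ' j ^ 2| ≤ 3 * ρ := by
      intro j hj
      have hji : j ≠ i := Finset.ne_of_mem_erase hj
      by_cases hjk : (j : ℕ) < d - k
      · have h1 := low ξ hS hn j hjk
        have h2 := low ξ' hS' hn' j hjk
        rw [abs_le]
        constructor <;> nlinarith [sq_nonneg (ξ j), sq_nonneg (ξ' j)]
      · have h1 := mid j hjk hji
        have h2 := bdd ξ hn j
        have h3 := bdd ξ' hn' j
        have h4 : |ξ j + ξ' j| ≤ 3 := (abs_add_le _ _).trans (by linarith)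
        calc |ξ j ^ 2 - ξ' j ^ 2| = |ξ j + ξ' j| * |ξ j - ξ' j| := by rw [← abs_mul]; congr 1; ring
          _ ≤ 3 * ρ := mul_le_mul h4 h1 (abs_nonneg _) (by norm_num)
    have hs : |∑ j ∈ Finset.univ.erase i, (ξ j ^ 2 - ξ' j ^ 2)| ≤ d * (3 * ρ) := by
      refine (Finset.abs_sum_le_sum_abs _ _).trans ((Finset.sum_le_sum hdiff).trans ?_)
      rw [Finset.sum_const, nsmul_eq_mul]
      gcongr
      refine (Finset.card_erase_le).trans ?_
      simp
    have e1 : ξ i ^ 2 - ξ' i ^ 2 =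
        (‖ξ‖ ^ 2 - ‖ξ'‖ ^ 2) - ∑ j ∈ Finset.univ.erase i, (ξ j ^ 2 - ξ' j ^ 2) := by
      rw [norm_sq_sum, norm_sq_sum, ← Finset.sum_sub_distrib,
        ← Finset.add_sum_erase _ _ (Finset.mem_univ i)]
      ring
    have e2 : |‖ξ‖ ^ 2 - ‖ξ'‖ ^ 2| ≤ 6 * ρ := by
      have h1 : |‖ξ‖ - ‖ξ'‖| ≤ 2 * ρ := by rw [abs_le]; constructor <;> nlinarith
      have h2 : |‖ξ‖ + ‖ξ'‖| ≤ 3 := by rw [abs_le]; constructor <;> linarith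
      calc |‖ξ‖ ^ 2 - ‖ξ'‖ ^ 2| = |‖ξ‖ + ‖ξ'‖| * |‖ξ‖ - ‖ξ'‖| := by
            rw [← abs_mul]; congr 1; ring
        _ ≤ 3 * (2 * ρ) := mul_le_mul h2 h1 (abs_nonneg _) (by norm_num)
        _ = _ := by ring
    have e3 : |ξ i ^ 2 - ξ' i ^ 2| ≤ (6 + 3 * d) * ρ := by
      rw [e1]
      refine (abs_sub _ _).trans ?_
      linarith
    have h5 : ‖ξ‖ ≤ 2 * ξ i := hS.2
    have h5' : ‖ξ'‖ ≤ 2 * ξ' i := hS'.2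
    have e4 : 1/2 ≤ |ξ i + ξ' i| := by
      refine le_trans ?_ (le_abs_self _)
      linarith
    have e5 : |ξ i ^ 2 - ξ' i ^ 2| = |ξ i + ξ' i| * |ξ i - ξ' i| := by
      rw [← abs_mul]; congr 1; ring
    have e6 : |ξ i - ξ' i| ≤ (12 + 6 * d) * ρ := by
      have := mul_le_mul_of_nonneg_right e4 (abs_nonneg (ξ i - ξ' i))
      linarith
    rw [← mul_pow, ← sq_abs]
    exact pow_le_pow_left₀ (abs_nonneg _) e6 2
  · have := mid i hi hiL
    rw [← mul_pow, ← sq_abs]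
    refine pow_le_pow_left₀ (abs_nonneg _) (this.trans ?_) 2
    nlinarith

lemma bpar_pos (d k : ℕ) (δ ρ : ℝ) (hδ : 0 < δ) (hρ : 0 < ρ) (i : Fin d) : 0 < bpar d k δ ρ i := by
  unfold bpar; split_ifs <;> positivity

lemma gW_lower {d : ℕ} (b : Fin d → ℝ) (hb : ∀ i, 0 < b i) (ζ : Rd d) (κ : ℝ)
    (h : ∀ i, ζ i ^ 2 ≤ κ ^ 2 * b i) :
    (∏ i, (π / b i) ^ (1/2 : ℝ)) * Real.exp (-(π ^ 2 * κ ^ 2)) ^ d ≤ gW b ζ := by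
  unfold gW
  rw [Finset.prod_mul_distrib]
  gcongr
  · exact Finset.prod_nonneg fun i _ => by have := hb i; positivity
  · calc Real.exp (-(π ^ 2 * κ ^ 2)) ^ d = ∏ i : Fin d, Real.exp (-(π ^ 2 * κ ^ 2)) := by simp
      _ ≤ _ := by
        refine Finset.prod_le_prod (fun i _ => (Real.exp_pos _).le) fun i _ => ?_
        rw [Real.exp_le_exp, neg_le_neg_iff, div_le_iff₀ (hb i), mul_assoc]
        exact mul_le_mul_of_nonneg_left (h i) (by positivity)

lemma pieces_card (d k : ℕ) (hk1 : 1 ≤ k) (hkd : k ≤ d) (ρ : ℝ) (hρ : 0 < ρ) (hρ1 : ρ ≤ 1)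
    (L : Fin d) (hLk : ¬ (L : ℕ) < d - k) :
    ∃ J : Finset (Fin d → ℤ), (∀ ξ : Rd d, ‖ξ‖ ≤ 3/2 → plab d k ρ L ξ ∈ J) ∧
      (J.card : ℝ) * (7 / ρ) ≤ (7 / ρ) ^ k := by
  classical
  set n : ℤ := ⌈2 / ρ⌉ with hn
  have hn0 : (2 / ρ : ℝ) ≤ n := Int.le_ceil _
  have hn1 : (n : ℝ) < 2 / ρ + 1 := Int.ceil_lt_add_one _
  have h2ρ : 0 < 2 / ρ := by positivity
  refine ⟨Fintype.piFinset (fun i : Fin d =>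
    if ¬ ((i : ℕ) < d - k) ∧ i ≠ L then Finset.Icc (-n) n else {0}), ?_, ?_⟩
  · intro ξ hξ
    rw [Fintype.mem_piFinset]
    intro i
    unfold plab
    split_ifs with h
    · have h1 : |ξ i| ≤ 3/2 := by
        apply abs_le_of_sq_le_sq _ (by norm_num)
        have := coord_sq_le ξ i
        nlinarith [norm_nonneg ξ]
      have h2 : |ξ i / ρ| ≤ 2 / ρ := by
        rw [abs_div, abs_of_pos hρ]
        gcongr
        linarith
      obtain ⟨h3, h4⟩ := abs_le.1 h2
      rw [Finset.mem_Icc]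
      constructor
      · rw [Int.le_floor]; push_cast; linarith
      · have : ((⌊ξ i / ρ⌋ : ℤ) : ℝ) ≤ n := (Int.floor_le _).trans (by linarith)
        exact_mod_cast this
    · simp
  · rw [Fintype.card_piFinset]
    have hone : 1 ≤ 1 / ρ := by rw [le_div_iff₀ hρ]; linarith
    have h7 : 7 / ρ = 7 * (1 / ρ) := by ring
    have h22 : 2 / ρ = 2 * (1 / ρ) := by ring
    have hcard : ((Finset.Icc (-n) n).card : ℝ) ≤ 7 / ρ := by
      have hnn : 0 ≤ n := by
        have : (0:ℝ) ≤ n := by linarith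
        exact_mod_cast this
      have : ((Finset.Icc (-n) n).card : ℤ) = 2 * n + 1 := by
        rw [Int.card_Icc, Int.toNat_of_nonneg (by omega)]; ring
      have h' : ((Finset.Icc (-n) n).card : ℝ) = 2 * n + 1 := by exact_mod_cast this
      rw [h']; linarith
    push_cast
    calc _ ≤ (∏ i : Fin d, if ¬ ((i : ℕ) < d - k) ∧ i ≠ L then 7 / ρ else 1) * (7 / ρ) := by
          gcongr with i
          split_ifs
          · exact hcard
          · simp
      _ = (∏ i : Fin d, if ¬ ((i : ℕ) < d - k) ∧ i ≠ L then 7 / ρ else 1) *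
            ∏ i : Fin d, (if i = L then 7 / ρ else 1) := by simp
      _ = ∏ i : Fin d, if (i : ℕ) < d - k then 1 else 7 / ρ := by
          rw [← Finset.prod_mul_distrib]
          refine Finset.prod_congr rfl fun i _ => ?_
          by_cases hi : i = L
          · simp [hi, hLk]
          · simp only [hi, not_false_eq_true, ne_eq, and_true, if_false, mul_one]
            split_ifs <;> simp_all
      _ = (7 / ρ) ^ k := by rw [prod_scale d k hkd]; simp
      _ ≤ _ := le_rfl

lemma prod_bpar (d k : ℕ) (hkd : k ≤ d) (δ ρ c : ℝ) (hδ : 0 < δ) (hρ : 0 < ρ) (hc : 0 < c) :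
    ∏ i : Fin d, (π / (c * bpar d k δ ρ i)) ^ (1/2 : ℝ) = √(π / c) ^ d / (δ ^ (d - k) * ρ ^ k) := by
  have : ∀ i : Fin d, (π / (c * bpar d k δ ρ i)) ^ (1/2 : ℝ) =
      if (i : ℕ) < d - k then √(π / c) / δ else √(π / c) / ρ := by
    intro i
    rw [← Real.sqrt_eq_rpow]
    unfold bpar
    split_ifs
    · rw [← div_div, Real.sqrt_div (by positivity), Real.sqrt_sq hδ.le]
    · rw [← div_div, Real.sqrt_div (by positivity), Real.sqrt_sq hρ.le]
  rw [Finset.prod_congr rfl (fun i _ => this i), prod_scale d k hkd, div_pow, div_pow,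
    div_mul_div_comm, ← pow_add, Nat.sub_add_cancel hkd]

lemma exp_identity (d k : ℕ) (hkd : k ≤ d) (δ ρ p : ℝ) (hδ : 0 < δ) (hρ : 0 < ρ) (hp : 2 < p) :
    (δ ^ (((d : ℝ) - (k : ℝ)) * (1 - 1/p)) * ρ ^ (((k : ℝ) - 1) / 2 - (k : ℝ) / p)) ^ 2 *
      ((δ ^ (d - k) * ρ ^ k)⁻¹) ^ (1 - 2 / p) =
    (δ ^ (d - k)) ^ 2 * ρ ^ k / (ρ * (δ ^ (d - k) * ρ ^ k)) := by
  have hp0 : p ≠ 0 := by linarith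
  obtain ⟨x, rfl⟩ : ∃ x, δ = Real.exp x := ⟨Real.log δ, (Real.exp_log hδ).symm⟩
  obtain ⟨y, rfl⟩ : ∃ y, ρ = Real.exp y := ⟨Real.log ρ, (Real.exp_log hρ).symm⟩
  simp only [← Real.exp_nat_mul, ← Real.exp_mul, ← Real.exp_add, ← Real.exp_neg, ← Real.exp_sub]
  congr 1
  push_cast [Nat.cast_sub hkd]
  field_simp
  ring

/-- The constant in the `L^p` lower bound. -/
def Lpconst (d k : ℕ) (p : ℝ) : ℝ :=
  √((√π ^ d * Real.exp (-(π ^ 2 * (12 + 6 * d) ^ 2)) ^ d * ((1 / (8 * d)) ^ d) ^ 2 * (7 / 7 ^ k)) /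
    (√(π / (p / (p - 2))) ^ d) ^ (1 - 2 / p))

lemma Lp_lower (d k : ℕ) (hd : 2 ≤ d) (hk1 : 1 ≤ k) (hkd : k ≤ d) (p δ m : ℝ) (hp : 2 < p)
    (hδ : 0 < δ) (hδ1 : δ ≤ 1/2) (hm : 0 < m) (hm1 : m ≤ 1/2) (L : Fin d) (hL : (L : ℕ) = d - 1)
    (f : Rd d → ℝ) (hf : Integrable f) (hf0 : ∀ ξ, 0 ≤ f ξ) (hfs : ∀ ξ, f ξ ≠ 0 → |‖ξ‖ - 1| ≤ m)
    (A : ℝ) (hA : 0 ≤ A) (hM : (1 / (8 * d)) ^ d * δ ^ (d - k) * A ≤ ∫ ξ in Scone d k δ L, f ξ) :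
    ENNReal.ofReal (Lpconst d k p * δ ^ (((d : ℝ) - (k : ℝ)) * (1 - 1/p))
                * (δ ^ 2 + m) ^ (((k : ℝ) - 1) / 2 - (k : ℝ) / p) * A)
      ≤ eLpNorm (𝓕⁻ (fun ξ => (f ξ : ℂ))) (ENNReal.ofReal p) volume := by
  set ρ := δ ^ 2 + m with hρ
  have hρ0 : 0 < ρ := by positivity
  have hρ1 : ρ ≤ 1 := by rw [hρ]; nlinarith
  have hLk : ¬ (L : ℕ) < d - k := by omega
  have hd0 : (0:ℝ) < d := by exact_mod_cast (by omega : 0 < d)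
  set q := p / (p - 2) with hq
  have hp2 : 0 < p - 2 := by linarith
  have hp0 : 0 < p := by linarith
  have hq0 : 0 < q := by positivity
  have hq1 : 1 / q = 1 - 2 / p := by rw [hq]; field_simp
  set b := bpar d k δ ρ with hbdef
  have hb : ∀ i, 0 < b i := bpar_pos d k δ ρ hδ hρ0
  obtain ⟨J, hJ, hJc⟩ := pieces_card d k hk1 hkd ρ hρ0 hρ1 L hLk
  set Q := ∫ z : Rd d × Rd d, f z.1 * f z.2 * gW b (z.1 - z.2) with hQ
  have hQ0 : 0 ≤ Q := integral_nonneg fun z =>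
    mul_nonneg (mul_nonneg (hf0 _) (hf0 _)) (gW_nonneg b hb _)
  set M := ∫ ξ in Scone d k δ L, f ξ with hMdef
  set D := δ ^ (d - k) * ρ ^ k with hD
  have hD0 : 0 < D := by positivity
  have hP : ∏ i, (π / b i) ^ (1/2 : ℝ) = √π ^ d / D := by
    have := prod_bpar d k hkd δ ρ 1 hδ hρ0 one_pos
    simpa using this
  set ω := √π ^ d / D * Real.exp (-(π ^ 2 * (12 + 6 * d) ^ 2)) ^ d with hω
  have hω0 : 0 ≤ ω := by positivity
  have h1 : ω * M ^ 2 ≤ J.card * Q := by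
    apply quad_lower b hb f hf hf0 _ (Scone_meas d k δ L) _ (plab_meas d k ρ L) J _ ω hω0
    · intro ξ hξ ξ' hξ' h0 h0' hpl
      rw [hω, ← hP]
      apply gW_lower b hb
      intro i
      exact geom_coord d k δ m ρ hδ hm hm1 hρ L hLk ξ ξ' hξ hξ' (hfs ξ h0) (hfs ξ' h0') hpl i
    · intro ξ _ h0
      apply hJ
      linarith [(abs_le.1 (hfs ξ h0)).2]
  have hv : AEStronglyMeasurable (𝓕⁻ (fun ξ => (f ξ : ℂ))) volume := by
    have hc : Continuous (𝓕 (fun ξ => (f ξ : ℂ))) :=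
      VectorFourier.fourierIntegral_continuous Real.continuous_fourierChar
        (by exact continuous_inner) hf.ofReal
    have : 𝓕⁻ (fun ξ => (f ξ : ℂ)) = fun w => 𝓕 (fun ξ => (f ξ : ℂ)) (-w) := by
      ext w; rw [Real.fourierInv_eq_fourier_neg]
    rw [this]
    exact (hc.comp continuous_neg).aestronglyMeasurable
  have h2 := holder_upper b hb _ hv p q hp hq
  rw [fourier_quad b hb f hf, prod_bpar d k hkd δ ρ q hδ hρ0 hq0] at h2
  set N := eLpNorm (𝓕⁻ (fun ξ => (f ξ : ℂ))) (ENNReal.ofReal p) volume with hN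
  by_cases hNtop : N = ⊤
  · rw [hNtop]; exact le_top
  obtain ⟨n, hn0, hn⟩ : ∃ n : ℝ, 0 ≤ n ∧ N = ENNReal.ofReal n :=
    ⟨N.toReal, ENNReal.toReal_nonneg, (ENNReal.ofReal_toReal hNtop).symm⟩
  set Y := (D⁻¹) ^ (1 - 2 / p) with hY
  have hY0 : 0 < Y := by positivity
  set X0 := (√(π / q) ^ d) ^ (1 - 2 / p) with hX0
  have hX00 : 0 < X0 := by
    have : 0 < √(π / q) := Real.sqrt_pos.2 (by positivity)
    positivity
  have hX : (√(π / q) ^ d / D) ^ (1 / q) = X0 * Y := by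
    rw [hq1, div_eq_mul_inv, Real.mul_rpow (by positivity) (by positivity)]
  rw [hX, hn, ← ENNReal.ofReal_pow hn0, ← ENNReal.ofReal_mul (by positivity),
    ENNReal.ofReal_le_ofReal_iff (by positivity)] at h2
  have hid := exp_identity d k hkd δ ρ p hδ hρ0 hp
  rw [← hD, ← hY] at hid
  set E := δ ^ (((d : ℝ) - (k : ℝ)) * (1 - 1/p)) * ρ ^ (((k : ℝ) - 1) / 2 - (k : ℝ) / p) with hE
  have hE0 : 0 < E := by positivity
  set c1 : ℝ := (1 / (8 * d)) ^ d with hc1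
  set e0 : ℝ := Real.exp (-(π ^ 2 * (12 + 6 * d) ^ 2)) ^ d with he0
  have he00 : 0 < e0 := by positivity
  set Z : ℝ := √π ^ d * e0 * c1 ^ 2 * (7 / 7 ^ k) with hZ
  have hZ0 : 0 ≤ Z := by positivity
  have h3 : Z * A ^ 2 * (E ^ 2 * Y) ≤ Q := by
    have hM2 : (c1 * δ ^ (d - k) * A) ^ 2 ≤ M ^ 2 := pow_le_pow_left₀ (by positivity) hM 2
    have h4 : ω * (c1 * δ ^ (d - k) * A) ^ 2 * (7 / ρ) ≤ (7 / ρ) ^ k * Q := by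
      calc _ ≤ ω * M ^ 2 * (7 / ρ) := by gcongr
        _ ≤ J.card * Q * (7 / ρ) := by gcongr
        _ = J.card * (7 / ρ) * Q := by ring
        _ ≤ _ := by gcongr
    have h5 : Z * A ^ 2 * (E ^ 2 * Y) =
        (ω * (c1 * δ ^ (d - k) * A) ^ 2 * (7 / ρ)) / (7 / ρ) ^ k := by
      rw [hid, hZ, hω, div_pow]
      field_simp
    rw [h5, div_le_iff₀ (by positivity)]
    linarith
  rw [hn]
  apply ENNReal.ofReal_le_ofReal
  apply le_of_sq_le_sq _ hn0
  have hc : Lpconst d k p ^ 2 = Z / X0 := by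
    unfold Lpconst
    rw [Real.sq_sqrt]
    exact div_nonneg hZ0 hX00.le
  have h6 : (Lpconst d k p * δ ^ (((d : ℝ) - (k : ℝ)) * (1 - 1/p))
                * ρ ^ (((k : ℝ) - 1) / 2 - (k : ℝ) / p) * A) ^ 2 = Z / X0 * E ^ 2 * A ^ 2 := by
    rw [← hc, hE]; ring
  rw [h6]
  have h7 : Z * A ^ 2 * (E ^ 2 * Y) ≤ n ^ 2 * (X0 * Y) := h3.trans h2
  have h8 : Z * A ^ 2 * E ^ 2 ≤ n ^ 2 * X0 := by
    apply le_of_mul_le_mul_right _ hY0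
    linarith
  rw [div_mul_eq_mul_div, div_mul_eq_mul_div, div_le_iff₀ hX00]
  linarith

lemma Lpconst_pos (d k : ℕ) (hd : 2 ≤ d) (p : ℝ) (hp : 2 < p) : 0 < Lpconst d k p := by
  unfold Lpconst
  have hd0 : (0:ℝ) < d := by exact_mod_cast (by omega : 0 < d)
  have hp2 : 0 < p - 2 := by linarith
  have hp0 : 0 < p := by linarith
  apply Real.sqrt_pos.2
  have h1 : 0 < √π := Real.sqrt_pos.2 Real.pi_pos
  have h2 : 0 < √(π / (p / (p - 2))) := Real.sqrt_pos.2 (by positivity)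
  positivity

/-- The real-valued trial function. -/
def knappR (d k : ℕ) (m δ : ℝ) (a : ℝ → ℝ) : Rd d → ℝ := fun ξ =>
  if |‖ξ‖ - 1| ≤ m ∧ blockSq d k ξ < δ ^ 2 * ‖ξ‖ ^ 2 then a |‖ξ‖ - 1| else 0

lemma knappFT_eq (d k : ℕ) (m δ : ℝ) (a : ℝ → ℝ) :
    knappFT d k m δ a = fun ξ => (knappR d k m δ a ξ : ℂ) := by
  ext ξ
  unfold knappFT knappR
  by_cases h : |‖ξ‖ - 1| ≤ m ∧ blockSq d k ξ < δ ^ 2 * ‖ξ‖ ^ 2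
  · rw [if_pos h, if_pos h]
  · rw [if_neg h, if_neg h]
    simp

lemma knappR_meas (d k : ℕ) (m δ : ℝ) (a : ℝ → ℝ) (ha : Measurable a) :
    Measurable (knappR d k m δ a) := by
  unfold knappR
  have hn : Measurable fun ξ : Rd d => |‖ξ‖ - 1| := by fun_prop
  refine Measurable.ite ?_ (ha.comp hn) measurable_const
  exact (measurableSet_le (f := fun ξ : Rd d => |‖ξ‖ - 1|) (by fun_prop) measurable_const).inter
    (Kcone_meas d k δ)

/-- Lemma 2.5: two-sided bounds for `q_ε(v)` and the lower bound for
`‖v‖_p` for the `G_k`-symmetric Knapp trial function `v = 𝓕⁻¹(knappFT)`. -/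
theorem stmt8 (d k : ℕ) (hd : 2 ≤ d) (hk1 : 1 ≤ k) (hkd : k ≤ d - 1)
    (s γ p c C : ℝ)
    (hs : (d : ℝ) / ((d : ℝ) + 1) < s) (hγ : 1 < γ)
    (hp : 2 < p) (hpk : 2 ≤ k → p < 2 * (k : ℝ) / ((k : ℝ) - 1))
    (hc : 0 < c) (hcC : c ≤ C) :
    ∃ c' C' ε₀ δ₀ m₀ : ℝ, 0 < c' ∧ c' ≤ C' ∧
      0 < ε₀ ∧ ε₀ ≤ 1/2 ∧ 0 < δ₀ ∧ δ₀ ≤ 1/2 ∧ 0 < m₀ ∧ m₀ ≤ 1/2 ∧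
      ∀ g : ℝ → ℝ → ℝ, IsAdmissible s γ c C g →
      ∀ ε δ m : ℝ, 0 < ε → ε < ε₀ → 0 < δ → δ < δ₀ → 0 < m → m ≤ m₀ →
      ∀ a : ℝ → ℝ, Measurable a → (∀ t, 0 ≤ a t) →
        IntegrableOn (fun t => a t ^ 2) (Set.Ioo 0 m) volume →
        (c' * δ ^ ((d : ℝ) - (k : ℝ)) * ∫ t in Set.Ioo (0:ℝ) m, a t ^ 2 * (ε + t ^ γ))
            ≤ (∫ ξ : Rd d, ‖knappFT d k m δ a ξ‖ ^ 2 * g ε ‖ξ‖) ∧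
          (∫ ξ : Rd d, ‖knappFT d k m δ a ξ‖ ^ 2 * g ε ‖ξ‖)
            ≤ C' * δ ^ ((d : ℝ) - (k : ℝ)) * (∫ t in Set.Ioo (0:ℝ) m, a t ^ 2 * (ε + t ^ γ)) ∧
          ENNReal.ofReal (c' * δ ^ (((d : ℝ) - (k : ℝ)) * (1 - 1/p))
                * (δ ^ 2 + m) ^ (((k : ℝ) - 1) / 2 - (k : ℝ) / p)
                * ∫ t in Set.Ioo (0:ℝ) m, a t)
            ≤ eLpNorm (𝓕⁻ (knappFT d k m δ a)) (ENNReal.ofReal p) volume := by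
  have hkd' : k ≤ d := by omega
  have hd0 : (0:ℝ) < d := by exact_mod_cast (by omega : 0 < d)
  have hLp := Lpconst_pos d k hd p hp
  set c1 : ℝ := (1 / (8 * d)) ^ d with hc1
  have hc10 : 0 < c1 := by positivity
  have hC0 : 0 < C := lt_of_lt_of_le hc hcC
  set c' : ℝ := min (Lpconst d k p) (c1 * c) with hc'
  have hc'0 : 0 < c' := lt_min hLp (by positivity)
  refine ⟨c', d * 2 ^ d * 2 ^ d * C + c', 1/2, 1/2, 1/2, hc'0, ?_, by norm_num, le_rfl,
    by norm_num, le_rfl, by norm_num, le_rfl, ?_⟩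
  · have : 0 ≤ d * 2 ^ d * 2 ^ d * C := by positivity
    linarith
  intro g hg ε δ m hε hε1 hδ hδ1 hm hm1 a ha ha0 hai
  have hεI : ε ∈ Set.Ioo (0:ℝ) 1 := ⟨hε, by linarith⟩
  obtain ⟨hgm, hgp, -, hgb⟩ := hg
  obtain ⟨L, hL⟩ : ∃ L : Fin d, (L : ℕ) = d - 1 := ⟨⟨d - 1, by omega⟩, rfl⟩
  have hKm := knappR_meas d k m δ a ha
  have hdk : δ ^ ((d : ℝ) - (k : ℝ)) = δ ^ (d - k) := by
    rw [← Nat.cast_sub hkd', Real.rpow_natCast]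
  rw [knappFT_eq]
  have hnorm : ∀ ξ, ‖((knappR d k m δ a ξ : ℝ) : ℂ)‖ ^ 2 = knappR d k m δ a ξ ^ 2 := by
    intro ξ; rw [Complex.norm_real, Real.norm_eq_abs, sq_abs]
  simp only [hnorm]
  have hH0 : ∀ t : ℝ, 0 ≤ t → 0 ≤ a t ^ 2 * (ε + t ^ γ) := fun t ht => by positivity
  have hHm : Measurable fun t : ℝ => a t ^ 2 * (ε + t ^ γ) := by fun_prop
  have hHi : IntegrableOn (fun t => a t ^ 2 * (ε + t ^ γ)) (Set.Ioo 0 m) := by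
    refine Integrable.mono' (hai.const_mul 2) hHm.aestronglyMeasurable ?_
    refine (ae_restrict_iff' measurableSet_Ioo).2 (ae_of_all _ fun t ht => ?_)
    rw [Real.norm_of_nonneg (hH0 t ht.1.le)]
    have : t ^ γ ≤ 1 := Real.rpow_le_one ht.1.le (by linarith [ht.2]) (by linarith)
    nlinarith [sq_nonneg (a t)]
  have haI : IntegrableOn a (Set.Ioo 0 m) := by
    have h1 : IntegrableOn (fun _ : ℝ => (1:ℝ)) (Set.Ioo 0 m) := by simp
    refine Integrable.mono' (h1.add hai) ha.aestronglyMeasurable (ae_of_all _ fun t => ?_)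
    rw [Real.norm_of_nonneg (ha0 t)]
    simp only [Pi.add_apply]
    nlinarith [sq_nonneg (a t - 1), ha0 t]
  have hin : ∀ ξ ∈ Kcone d k δ, |‖ξ‖ - 1| ≤ m → knappR d k m δ a ξ = a |‖ξ‖ - 1| :=
    fun ξ h1 h2 => if_pos ⟨h2, h1⟩
  have hout : ∀ ξ, ¬ (|‖ξ‖ - 1| ≤ m ∧ ξ ∈ Kcone d k δ) → knappR d k m δ a ξ = 0 :=
    fun ξ h => if_neg h
  have hR0 : ∀ ξ, 0 ≤ knappR d k m δ a ξ := by
    intro ξ; unfold knappR; split_ifs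
    · exact ha0 _
    · exact le_rfl
  have hF0 : ∀ ξ : Rd d, 0 ≤ knappR d k m δ a ξ ^ 2 * g ε ‖ξ‖ := fun ξ =>
    mul_nonneg (sq_nonneg _) (hgp ε hεI _).le
  obtain ⟨hqi, hqlo, hqup⟩ := mass_bounds d k hd hk1 hkd' δ m hδ (by linarith) hm hm1 L hL
    (fun t => a t ^ 2 * (ε + t ^ γ)) hHm hH0 hHi
    (fun ξ => knappR d k m δ a ξ ^ 2 * g ε ‖ξ‖)
    ((hKm.pow_const 2).mul ((hgm ε hεI).comp measurable_norm)) hF0 c C hc.le hC0.le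
    (fun ξ h1 h2 => by
      simp only [hin ξ h1 h2]
      have := (hgb ε hεI ‖ξ‖ (by linarith)).1
      nlinarith [mul_le_mul_of_nonneg_left this (sq_nonneg (a |‖ξ‖ - 1|))])
    (fun ξ h1 h2 => by
      simp only [hin ξ h1 h2]
      have := (hgb ε hεI ‖ξ‖ (by linarith)).2
      nlinarith [mul_le_mul_of_nonneg_left this (sq_nonneg (a |‖ξ‖ - 1|))])
    (fun ξ h => by simp [hout ξ h])
  obtain ⟨hfi, hflo, -⟩ := mass_bounds d k hd hk1 hkd' δ m hδ (by linarith) hm hm1 L hL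
    a ha (fun t _ => ha0 t) haI (knappR d k m δ a) hKm hR0 1 1 zero_le_one zero_le_one
    (fun ξ h1 h2 => by rw [hin ξ h1 h2, one_mul])
    (fun ξ h1 h2 => by rw [hin ξ h1 h2, one_mul])
    hout
  have hI0 : 0 ≤ ∫ t in Set.Ioo (0:ℝ) m, a t ^ 2 * (ε + t ^ γ) :=
    setIntegral_nonneg measurableSet_Ioo fun t ht => hH0 t ht.1.le
  have hA0 : 0 ≤ ∫ t in Set.Ioo (0:ℝ) m, a t := integral_nonneg fun t => ha0 t
  have hδk : 0 < δ ^ (d - k) := by positivity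
  rw [hdk]
  refine ⟨?_, ?_, ?_⟩
  · refine le_trans ?_ (hqlo.trans (setIntegral_le_integral hqi (ae_of_all _ hF0)))
    have : c' ≤ c1 * c := min_le_right _ _
    gcongr
  · refine hqup.trans ?_
    have : d * 2 ^ d * 2 ^ d * C ≤ d * 2 ^ d * 2 ^ d * C + c' := by linarith
    gcongr
  · refine le_trans (ENNReal.ofReal_le_ofReal ?_)
      (Lp_lower d k hd hk1 hkd' p δ m hp hδ hδ1.le hm hm1 L hL (knappR d k m δ a) hfi hR0
        (fun ξ h => by
          by_contra h'
          exact h (hout ξ (fun h'' => h' h''.1)))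
        (∫ t in Set.Ioo (0:ℝ) m, a t) hA0 (by rw [mul_one] at hflo; exact hflo))
    have : c' ≤ Lpconst d k p := min_le_left _ _
    gcongr
end
end

section
/- Assume d ≥ 2 and 2 < p < ∞. Let (g_ε) be (s,γ)-admissible for some s > d/(d+1) and γ > 1. Then there exist constants 0 < c' ≤ C' < ∞ and thresholds ε₀, m₀ ∈ (0,1/2], depending only on d, p, s, γ and the admissibility constants, with the following property: for all ε ∈ (0,ε₀), m ∈ (0,m₀], and every nonnegative measurable a : (0,∞) → [0,∞) with ∫_0^m a(t)² dt < ∞, the radial function v ∈ L²(ℝ^d) defined by v̂(ξ) = 1_{||ξ|−1| ≤ m} · a(||ξ|−1|) satisfies c' ∫_0^m a(t)²(ε+t^γ) dt ≤ q_ε(v) ≤ C' ∫_0^m a(t)²(ε+t^γ) dt, and ‖v‖_{L^p(ℝ^d)} ≥ c' (∫_0^m a(t) dt) · F(m), where F(m) := m^{(d−1)/2 − d/p} if 2 < p < 2d/(d−1), F(m) := |log m|^{1/p} if p = 2d/(d−1), and F(m) := 1 if p > 2d/(d−1). -/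
open MeasureTheory Real Filter
open scoped ENNReal FourierTransform RealInnerProductSpace Topology

noncomputable section

/-- The radial trial function on the Fourier side: `V(ξ) = 1_{||ξ|-1| ≤ m} · a(||ξ|-1|)`. -/
def radialFT (d : ℕ) (m : ℝ) (a : ℝ → ℝ) : Rd d → ℂ := fun ξ =>
  if |‖ξ‖ - 1| ≤ m then ((a |‖ξ‖ - 1| : ℝ) : ℂ) else 0

lemma ode_energy (w w1 : ℝ → ℝ) (κ : ℝ)
    (h0 : ∀ z, 0 < z → HasDerivAt w (w1 z) z)
    (h1 : ∀ z, 0 < z → HasDerivAt w1 ((κ / z ^ 2 - 1) * w z) z)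
    (hw : 0 < w 1) :
    ∃ e0 e1 : ℝ, 0 < e0 ∧ 0 < e1 ∧ ∀ z, 1 ≤ z →
      e0 ^ 2 ≤ w z ^ 2 + w1 z ^ 2 ∧ w z ^ 2 + w1 z ^ 2 ≤ e1 ^ 2 := by
  set E : ℝ → ℝ := fun z => w z ^ 2 + w1 z ^ 2 with hE
  have hEd : ∀ z, 0 < z → HasDerivAt E (2 * κ * (w z * w1 z) / z ^ 2) z := by
    intro z hz
    have := ((h0 z hz).pow 2).add ((h1 z hz).pow 2)
    refine this.congr_deriv ?_
    field_simp
    push_cast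
    ring
  set K := |κ| with hK
  have hexp : ∀ c z : ℝ, 0 < z → HasDerivAt (fun z => Real.exp (c / z)) 
      (Real.exp (c / z) * (-c / z ^ 2)) z := by
    intro c z hz
    have h : HasDerivAt (fun z : ℝ => c / z) (-c / z ^ 2) z := by
      have := (hasDerivAt_const z c).div (hasDerivAt_id z) hz.ne'
      refine this.congr_deriv ?_
      simp
    exact h.exp
  have hbd : ∀ z, 0 < z → |2 * κ * (w z * w1 z) / z ^ 2| ≤ K * E z / z ^ 2 := by
    intro z hz
    rw [abs_div, abs_of_pos (by positivity : 0 < z ^ 2)]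
    gcongr
    rw [abs_mul, abs_mul, abs_two, abs_mul]
    have : 2 * (|w z| * |w1 z|) ≤ E z := by
      simp only [hE]
      rw [← sq_abs (w z), ← sq_abs (w1 z)]
      nlinarith [sq_nonneg (|w z| - |w1 z|)]
    nlinarith [abs_nonneg κ]
  have hmono : MonotoneOn (fun z => E z * Real.exp (-K / z)) (Set.Ici 1) := by
    have hd : ∀ z, 0 < z → HasDerivAt (fun z => E z * Real.exp (-K / z)) _ z :=
      fun z hz => (hEd z hz).mul (hexp (-K) z hz)
    apply monotoneOn_of_deriv_nonneg (convex_Ici 1)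
    · intro z hz
      exact (hd z (lt_of_lt_of_le one_pos hz)).continuousAt.continuousWithinAt
    · intro z hz
      rw [interior_Ici] at hz
      exact (hd z (lt_trans one_pos hz)).differentiableAt.differentiableWithinAt
    · intro z hz
      rw [interior_Ici] at hz
      have hz0 : 0 < z := lt_trans one_pos hz
      rw [(hd z hz0).deriv]
      have := neg_le_of_abs_le (hbd z hz0)
      have h2 : 0 < Real.exp (-K / z) := Real.exp_pos _
      have : 0 ≤ (2 * κ * (w z * w1 z) / z ^ 2 + K * E z / z ^ 2) * Real.exp (-K / z) := by
        apply mul_nonneg _ h2.le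
        linarith
      convert this using 1
      ring
  have hanti : AntitoneOn (fun z => E z * Real.exp (K / z)) (Set.Ici 1) := by
    have hd : ∀ z, 0 < z → HasDerivAt (fun z => E z * Real.exp (K / z)) _ z :=
      fun z hz => (hEd z hz).mul (hexp K z hz)
    apply antitoneOn_of_deriv_nonpos (convex_Ici 1)
    · intro z hz
      exact (hd z (lt_of_lt_of_le one_pos hz)).continuousAt.continuousWithinAt
    · intro z hz
      rw [interior_Ici] at hz
      exact (hd z (lt_trans one_pos hz)).differentiableAt.differentiableWithinAt
    · intro z hz
      rw [interior_Ici] at hz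
      have hz0 : 0 < z := lt_trans one_pos hz
      rw [(hd z hz0).deriv]
      have := le_of_abs_le (hbd z hz0)
      have h2 : 0 < Real.exp (K / z) := Real.exp_pos _
      have : 0 ≤ (K * E z / z ^ 2 - 2 * κ * (w z * w1 z) / z ^ 2) * Real.exp (K / z) := by
        apply mul_nonneg _ h2.le
        linarith
      rw [← neg_nonneg]
      convert this using 1
      ring
  have hK0 : 0 ≤ K := abs_nonneg _
  have hE1 : 0 < E 1 := by simp only [hE]; positivity
  refine ⟨√(E 1 * Real.exp (-K)), √(E 1 * Real.exp K), by positivity, by positivity, ?_⟩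
  intro z hz
  have hz0 : 0 < z := lt_of_lt_of_le one_pos hz
  rw [Real.sq_sqrt (by positivity), Real.sq_sqrt (by positivity)]
  have hEz : 0 ≤ E z := by simp only [hE]; positivity
  have a1 := hmono (Set.mem_Ici.2 le_rfl) (Set.mem_Ici.2 hz) hz
  have a2 := hanti (Set.mem_Ici.2 le_rfl) (Set.mem_Ici.2 hz) hz
  simp only [div_one] at a1 a2
  have b1 : Real.exp (-K / z) ≤ 1 := by
    rw [Real.exp_le_one_iff]; apply div_nonpos_of_nonpos_of_nonneg <;> linarith
  have b2 : 1 ≤ Real.exp (K / z) := Real.one_le_exp (by positivity)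
  constructor
  · refine a1.trans ?_
    exact mul_le_of_le_one_right hEz b1
  · refine le_trans ?_ a2
    exact le_mul_of_one_le_right hEz b2

lemma ode_good (w w1 : ℝ → ℝ) (κ : ℝ)
    (h0 : ∀ z, 0 < z → HasDerivAt w (w1 z) z)
    (h1 : ∀ z, 0 < z → HasDerivAt w1 ((κ / z ^ 2 - 1) * w z) z)
    (hw : 0 < w 1) :
    ∃ b η : ℝ, 0 < b ∧ 0 < η ∧ η ≤ 1 ∧ ∀ Z, 2 ≤ Z → ∃ y ∈ Set.Icc Z (Z + 1),
      ∃ σ : ℝ, (σ = 1 ∨ σ = -1) ∧ ∀ z, |z - y| ≤ η → b ≤ σ * w z := by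
  obtain ⟨e0, e1, he0, he1, hE⟩ := ode_energy w w1 κ h0 h1 hw
  refine ⟨e0 / 8, min 1 (e0 / (8 * e1)), by positivity, by positivity, min_le_left _ _, ?_⟩
  intro Z hZ
  have hw1 : ∀ z, 1 ≤ z → |w1 z| ≤ e1 := by
    intro z hz
    apply abs_le_of_sq_le_sq _ he1.le
    nlinarith [(hE z hz).2, sq_nonneg (w z)]
  have hex : ∃ y ∈ Set.Icc Z (Z + 1), e0 / 4 ≤ |w y| := by
    by_contra! hcon
    obtain ⟨ξ, hξ, hξe⟩ := exists_hasDerivAt_eq_slope w w1 (by linarith : Z < Z + 1)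
      (fun z hz => (h0 z (by linarith [hz.1])).continuousAt.continuousWithinAt)
      (fun z hz => h0 z (by linarith [hz.1]))
    have c1 := hcon Z ⟨le_rfl, by linarith⟩
    have c2 := hcon (Z + 1) ⟨by linarith, le_rfl⟩
    have c3 := hcon ξ ⟨hξ.1.le, hξ.2.le⟩
    have c4 := (hE ξ (by linarith [hξ.1])).1
    have c5 : |w1 ξ| < e0 / 2 := by
      rw [hξe]
      rw [abs_lt] at *
      rw [show Z + 1 - Z = 1 by ring, div_one]
      constructor <;> linarith
    rw [← sq_abs (w ξ), ← sq_abs (w1 ξ)] at c4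
    nlinarith [abs_nonneg (w ξ), abs_nonneg (w1 ξ)]
  obtain ⟨y, hy, hyw⟩ := hex
  have hlip : ∀ z, |z - y| ≤ min 1 (e0 / (8 * e1)) → |w z - w y| ≤ e0 / 8 := by
    intro z hz
    have hz1 : |z - y| ≤ 1 := hz.trans (min_le_left _ _)
    have hz2 : |z - y| ≤ e0 / (8 * e1) := hz.trans (min_le_right _ _)
    have := (convex_Ici (1:ℝ)).norm_image_sub_le_of_norm_hasDerivWithin_le (s := Set.Ici (1:ℝ)) (f := w) (f' := w1) (C := e1)
      (x := y) (y := z)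
      (fun x hx => (h0 x (lt_of_lt_of_le one_pos hx)).hasDerivWithinAt)
      (fun x hx => by rw [Real.norm_eq_abs]; exact hw1 x hx)
      (Set.mem_Ici.2 (by have := hy.1; linarith)) (Set.mem_Ici.2 (by have := hy.1; have := (abs_le.1 hz1).1; linarith))
    rw [Real.norm_eq_abs, Real.norm_eq_abs] at this
    refine this.trans ?_
    calc e1 * |z - y| ≤ e1 * (e0 / (8 * e1)) := by gcongr
      _ = e0 / 8 := by field_simp
  refine ⟨y, hy, ?_⟩
  rcases le_total 0 (w y) with h | h
  · refine ⟨1, Or.inl rfl, fun z hz => ?_⟩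
    rw [abs_of_nonneg h] at hyw
    have := (abs_le.1 (hlip z hz)).1
    linarith
  · refine ⟨-1, Or.inr rfl, fun z hz => ?_⟩
    rw [abs_of_nonpos h] at hyw
    have := (abs_le.1 (hlip z hz)).2
    linarith

/-- Bessel-type integral. -/
def Hf (k : ℕ) (z : ℝ) : ℝ := ∫ θ in (0:ℝ)..π, Real.cos (z * Real.cos θ) * Real.sin θ ^ k
def Hf1 (k : ℕ) (z : ℝ) : ℝ :=
  ∫ θ in (0:ℝ)..π, -(Real.cos θ * Real.sin (z * Real.cos θ)) * Real.sin θ ^ k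
def Hf2 (k : ℕ) (z : ℝ) : ℝ :=
  ∫ θ in (0:ℝ)..π, -(Real.cos θ ^ 2 * Real.cos (z * Real.cos θ)) * Real.sin θ ^ k

lemma Hf_deriv (k : ℕ) (z : ℝ) : HasDerivAt (Hf k) (Hf1 k z) z := by
  refine (intervalIntegral.hasDerivAt_integral_of_dominated_loc_of_deriv_le
    (F := fun z θ => Real.cos (z * Real.cos θ) * Real.sin θ ^ k)
    (F' := fun z θ => -(Real.cos θ * Real.sin (z * Real.cos θ)) * Real.sin θ ^ k)
    (bound := fun _ => 1) (s := Set.univ) Filter.univ_mem ?_ ?_ ?_ ?_ ?_ ?_).2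
  · exact Eventually.of_forall fun z => by
      exact (by fun_prop : Continuous fun θ => Real.cos (z * Real.cos θ) * Real.sin θ ^ k).aestronglyMeasurable
  · exact (by fun_prop : Continuous fun θ => Real.cos (z * Real.cos θ) * Real.sin θ ^ k).intervalIntegrable _ _
  · exact (by fun_prop : Continuous fun θ => -(Real.cos θ * Real.sin (z * Real.cos θ)) * Real.sin θ ^ k).aestronglyMeasurable
  · refine Eventually.of_forall fun θ _ z _ => ?_
    rw [norm_mul, norm_neg, norm_mul, norm_pow]
    simp only [Real.norm_eq_abs]
    have h1 := Real.abs_cos_le_one θ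
    have h2 := Real.abs_sin_le_one (z * Real.cos θ)
    have h3 : |Real.sin θ| ^ k ≤ 1 := pow_le_one₀ (abs_nonneg _) (Real.abs_sin_le_one θ)
    exact mul_le_one₀ (mul_le_one₀ h1 (abs_nonneg _) h2) (by positivity) h3
  · exact intervalIntegrable_const
  · refine Eventually.of_forall fun θ _ z _ => ?_
    have : HasDerivAt (fun z => z * Real.cos θ) (Real.cos θ) z := by
      simpa using (hasDerivAt_id z).mul_const (Real.cos θ)
    refine (this.cos.mul_const (Real.sin θ ^ k)).congr_deriv ?_
    ring

lemma Hf1_deriv (k : ℕ) (z : ℝ) : HasDerivAt (Hf1 k) (Hf2 k z) z := by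
  refine (intervalIntegral.hasDerivAt_integral_of_dominated_loc_of_deriv_le
    (F := fun z θ => -(Real.cos θ * Real.sin (z * Real.cos θ)) * Real.sin θ ^ k)
    (F' := fun z θ => -(Real.cos θ ^ 2 * Real.cos (z * Real.cos θ)) * Real.sin θ ^ k)
    (bound := fun _ => 1) (s := Set.univ) Filter.univ_mem ?_ ?_ ?_ ?_ ?_ ?_).2
  · exact Eventually.of_forall fun z => by
      exact (by fun_prop : Continuous fun θ => -(Real.cos θ * Real.sin (z * Real.cos θ)) * Real.sin θ ^ k).aestronglyMeasurable
  · exact (by fun_prop : Continuous fun θ => -(Real.cos θ * Real.sin (z * Real.cos θ)) * Real.sin θ ^ k).intervalIntegrable _ _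
  · exact (by fun_prop : Continuous fun θ => -(Real.cos θ ^ 2 * Real.cos (z * Real.cos θ)) * Real.sin θ ^ k).aestronglyMeasurable
  · refine Eventually.of_forall fun θ _ z _ => ?_
    rw [norm_mul, norm_neg, norm_mul, norm_pow, norm_pow]
    simp only [Real.norm_eq_abs]
    have h1 : |Real.cos θ| ^ 2 ≤ 1 := pow_le_one₀ (abs_nonneg _) (Real.abs_cos_le_one θ)
    have h2 := Real.abs_cos_le_one (z * Real.cos θ)
    have h3 : |Real.sin θ| ^ k ≤ 1 := pow_le_one₀ (abs_nonneg _) (Real.abs_sin_le_one θ)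
    exact mul_le_one₀ (mul_le_one₀ h1 (abs_nonneg _) h2) (by positivity) h3
  · exact intervalIntegrable_const
  · refine Eventually.of_forall fun θ _ z _ => ?_
    have : HasDerivAt (fun z => z * Real.cos θ) (Real.cos θ) z := by
      simpa using (hasDerivAt_id z).mul_const (Real.cos θ)
    refine (((this.sin.const_mul (Real.cos θ)).neg).mul_const (Real.sin θ ^ k)).congr_deriv ?_
    ring

lemma Hf_ode (k : ℕ) (z : ℝ) : z * Hf2 k z + (k + 1) * Hf1 k z + z * Hf k z = 0 := by
  have key : ∫ θ in (0:ℝ)..π, 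
      (z * (-(Real.cos θ ^ 2 * Real.cos (z * Real.cos θ)) * Real.sin θ ^ k)
      + (k + 1) * (-(Real.cos θ * Real.sin (z * Real.cos θ)) * Real.sin θ ^ k)
      + z * (Real.cos (z * Real.cos θ) * Real.sin θ ^ k)) = 
      -(Real.sin (z * Real.cos π) * Real.sin π ^ (k+1)) - 
      -(Real.sin (z * Real.cos 0) * Real.sin 0 ^ (k+1)) := by
    refine intervalIntegral.integral_eq_sub_of_hasDerivAt
      (f := fun θ => -(Real.sin (z * Real.cos θ) * Real.sin θ ^ (k+1))) ?_ ?_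
    · intro θ _
      have h1 := ((Real.hasDerivAt_cos θ).const_mul z).sin
      have h2 := (Real.hasDerivAt_sin θ).pow (k+1)
      refine (h1.mul h2).neg.congr_deriv ?_
      simp only [Pi.pow_apply, Nat.add_sub_cancel]
      push_cast
      have : Real.cos θ ^ 2 = 1 - Real.sin θ ^ 2 := by rw [← Real.sin_sq_add_cos_sq θ]; ring
      rw [this]
      ring
    · exact (by fun_prop : Continuous _).intervalIntegrable _ _
  rw [intervalIntegral.integral_add, intervalIntegral.integral_add,
    intervalIntegral.integral_const_mul, intervalIntegral.integral_const_mul,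
    intervalIntegral.integral_const_mul] at key
  · unfold Hf Hf1 Hf2
    rw [key]; simp
  all_goals exact (by fun_prop : Continuous _).intervalIntegrable _ _

lemma Hf_low (k : ℕ) : ∃ h : ℝ, 0 < h ∧ ∀ z, |z| ≤ 1 → h ≤ Hf k z := by
  have hS : 0 < ∫ θ in (0:ℝ)..π, Real.sin θ ^ k := integral_sin_pow_pos k
  refine ⟨Real.cos 1 * ∫ θ in (0:ℝ)..π, Real.sin θ ^ k, mul_pos Real.cos_one_pos hS, ?_⟩
  intro z hz
  rw [← intervalIntegral.integral_const_mul]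
  unfold Hf
  apply intervalIntegral.integral_mono_on pi_pos.le
  · exact (by fun_prop : Continuous _).intervalIntegrable _ _
  · exact (by fun_prop : Continuous _).intervalIntegrable _ _
  · intro θ hθ
    have h0 := Real.sin_nonneg_of_mem_Icc hθ
    gcongr
    rw [← Real.cos_abs (z * Real.cos θ)]
    have h1 : |z * Real.cos θ| ≤ 1 := by
      rw [abs_mul]; exact mul_le_one₀ hz (abs_nonneg _) (Real.abs_cos_le_one θ)
    apply Real.cos_le_cos_of_nonneg_of_le_pi (abs_nonneg _) _ h1
    linarith [Real.pi_gt_three]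

lemma Hf_good (k : ℕ) : ∃ b η : ℝ, 0 < b ∧ 0 < η ∧ η ≤ 1 ∧ ∀ Z, 2 ≤ Z → ∃ y ∈ Set.Icc Z (Z + 1),
      ∃ σ : ℝ, (σ = 1 ∨ σ = -1) ∧ ∀ z, |z - y| ≤ η → b * z ^ (-(((k:ℝ)+1)/2)) ≤ σ * Hf k z := by
  set μ : ℝ := ((k:ℝ)+1)/2 with hμ
  have hp : ∀ z : ℝ, 0 < z → HasDerivAt (fun z : ℝ => z ^ μ) (z ^ μ * (μ / z)) z := by
    intro z hz
    refine (Real.hasDerivAt_rpow_const (Or.inl hz.ne')).congr_deriv ?_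
    rw [Real.rpow_sub_one hz.ne']; ring
  obtain ⟨b, η, hb, hη, hη1, H⟩ := ode_good (fun z => z ^ μ * Hf k z)
    (fun z => z ^ μ * (Hf1 k z + μ / z * Hf k z)) (μ ^ 2 - μ)
    (by
      intro z hz
      refine ((hp z hz).mul (Hf_deriv k z)).congr_deriv ?_
      ring)
    (by
      intro z hz
      have hd : HasDerivAt (fun z : ℝ => μ / z) (-μ / z ^ 2) z := by
        have := (hasDerivAt_const z μ).div (hasDerivAt_id z) hz.ne'
        refine this.congr_deriv ?_
        simp
      refine ((hp z hz).mul ((Hf1_deriv k z).add (hd.mul (Hf_deriv k z)))).congr_deriv ?_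
      have h2 : Hf2 k z = - (2 * μ / z) * Hf1 k z - Hf k z := by
        have := Hf_ode k z
        have h3 : (k:ℝ) + 1 = 2 * μ := by rw [hμ]; ring
        rw [h3] at this
        field_simp
        linarith
      simp only [Pi.add_apply, Pi.mul_apply]
      rw [h2]
      field_simp
      ring)
    (by
      obtain ⟨h, hh, H⟩ := Hf_low k
      have := H 1 (by simp)
      simp; linarith)
  refine ⟨b, η, hb, hη, hη1, fun Z hZ => ?_⟩
  obtain ⟨y, hy, σ, hσ, hw⟩ := H Z hZ
  refine ⟨y, hy, σ, hσ, fun z hz => ?_⟩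
  have := hw z hz
  have hz0 : 0 < z := by have := hy.1; have := (abs_le.1 hz).1; linarith
  rw [Real.rpow_neg hz0.le, ← div_eq_mul_inv, div_le_iff₀ (by positivity)]
  linarith

/-- splitting off the zeroth coordinate -/
def splitEq (n : ℕ) : EuclideanSpace ℝ (Fin (n+1)) ≃ᵐ ℝ × EuclideanSpace ℝ (Fin n) :=
  ((MeasurableEquiv.toLp 2 (Fin (n+1) → ℝ)).symm.trans
    (MeasurableEquiv.piFinSuccAbove (fun _ => ℝ) 0)).trans
    (MeasurableEquiv.prodCongr (MeasurableEquiv.refl ℝ) (MeasurableEquiv.toLp 2 (Fin n → ℝ)))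

lemma splitEq_mp (n : ℕ) : MeasurePreserving (splitEq n) volume volume := by
  unfold splitEq
  refine MeasurePreserving.trans (μb := volume) (MeasurePreserving.trans (μb := volume) ?_ ?_) ?_
  · exact EuclideanSpace.volume_preserving_symm_measurableEquiv_toLp _
  · exact volume_preserving_piFinSuccAbove (fun _ => ℝ) 0
  · exact MeasurePreserving.prod (MeasurePreserving.id _) (PiLp.volume_preserving_toLp (Fin n))

lemma splitEq_fst (n : ℕ) (v : EuclideanSpace ℝ (Fin (n+1))) : (splitEq n v).1 = v 0 := rfl

lemma splitEq_norm (n : ℕ) (v : EuclideanSpace ℝ (Fin (n+1))) :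
    ‖v‖ = √((splitEq n v).1 ^ 2 + ‖(splitEq n v).2‖ ^ 2) := by
  rw [EuclideanSpace.norm_eq, EuclideanSpace.norm_sq_eq, Fin.sum_univ_succ]
  simp only [Real.norm_eq_abs, sq_abs]
  rfl

lemma radial_rot (k : ℕ) (f : ℝ → ℝ) (x : EuclideanSpace ℝ (Fin (k+2))) :
    ∫ v : EuclideanSpace ℝ (Fin (k+2)), Real.cos (2 * π * ⟪v, x⟫) * f ‖v‖ =
    ∫ v : EuclideanSpace ℝ (Fin (k+2)), Real.cos (2 * π * ‖x‖ * v 0) * f ‖v‖ := by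
  set y : EuclideanSpace ℝ (Fin (k+2)) := EuclideanSpace.single 0 ‖x‖ with hy
  have hxy : ‖x‖ = ‖y‖ := by simp [hy]
  set A := (ℝ ∙ (y - x))ᗮ.reflection with hA
  have hAx : A y = x := Submodule.reflection_sub hxy.symm
  rw [← MeasurePreserving.integral_comp A.measurePreserving A.toHomeomorph.measurableEmbedding]
  congr 1
  ext v
  have hin : ⟪A v, x⟫ = ⟪v, y⟫ := by rw [← hAx, A.inner_map_map]
  rw [hin]
  simp only [LinearIsometryEquiv.norm_map]
  congr 2
  simp [hy, EuclideanSpace.inner_single_right]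
  ring

lemma radial_cos (k : ℕ) : ∃ κ : ℝ, 0 < κ ∧ ∀ f : ℝ → ℝ, Measurable f →
    Integrable (fun v : EuclideanSpace ℝ (Fin (k+2)) => f ‖v‖) volume → ∀ x : EuclideanSpace ℝ (Fin (k+2)),
    ∫ v : EuclideanSpace ℝ (Fin (k+2)), Real.cos (2 * π * ⟪v, x⟫) * f ‖v‖ =
      κ * ∫ r in Set.Ioi (0:ℝ), r ^ (k+1) * f r * Hf k (2 * π * ‖x‖ * r) := by
  set κ : ℝ := (k+1) * volume.real (Metric.ball (0 : EuclideanSpace ℝ (Fin (k+1))) 1) with hκ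
  have hκ0 : 0 < κ := by
    have : 0 < volume.real (Metric.ball (0 : EuclideanSpace ℝ (Fin (k+1))) 1) :=
      ENNReal.toReal_pos (Metric.measure_ball_pos _ _ one_pos).ne' measure_ball_lt_top.ne
    positivity
  have hpolar : ∀ h : ℝ → ℝ, ∫ y : EuclideanSpace ℝ (Fin (k+1)), h ‖y‖ =
      κ * ∫ s in Set.Ioi (0:ℝ), s ^ k * h s := by
    intro h
    rw [integral_fun_norm_addHaar volume h]
    simp only [finrank_euclideanSpace, Fintype.card_fin, nsmul_eq_mul, smul_eq_mul, Nat.add_sub_cancel]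
    rw [hκ]; push_cast; ring
  refine ⟨κ, hκ0, fun f hf hfi x => ?_⟩
  rw [radial_rot]
  set ρ := 2 * π * ‖x‖ with hρ
  -- the integrand on the product
  set g : ℝ × EuclideanSpace ℝ (Fin (k+1)) → ℝ := fun q => f (√(q.1 ^ 2 + ‖q.2‖ ^ 2)) with hg
  have hgi : Integrable g (volume.prod volume) := by
    have : (fun v : EuclideanSpace ℝ (Fin (k+2)) => f ‖v‖) = g ∘ splitEq (k+1) := by
      ext v
      simp only [hg, Function.comp]
      rw [splitEq_norm]
    rw [this] at hfi
    exact ((splitEq_mp (k+1)).integrable_comp_emb (splitEq (k+1)).measurableEmbedding).1 hfi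
  have hgci : Integrable (fun q : ℝ × EuclideanSpace ℝ (Fin (k+1)) => Real.cos (ρ * q.1) * g q) (volume.prod volume) := by
    apply hgi.bdd_mul (c := 1)
    · exact (by fun_prop : Continuous fun q : ℝ × EuclideanSpace ℝ (Fin (k+1)) => Real.cos (ρ * q.1)).aestronglyMeasurable
    · exact Eventually.of_forall fun q => by simpa using Real.abs_cos_le_one _
  have e1 : ∫ v : EuclideanSpace ℝ (Fin (k+2)), Real.cos (ρ * v 0) * f ‖v‖ =
      ∫ t : ℝ, ∫ y : EuclideanSpace ℝ (Fin (k+1)), Real.cos (ρ * t) * g (t, y) := by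
    rw [← integral_prod (fun q : ℝ × EuclideanSpace ℝ (Fin (k+1)) => Real.cos (ρ * q.1) * g q) hgci]
    rw [← Measure.volume_eq_prod, ← (splitEq_mp (k+1)).integral_comp (splitEq (k+1)).measurableEmbedding]
    congr 1
    ext v
    simp only [hg]
    rw [splitEq_norm, splitEq_fst]
  rw [e1]
  have e2 : ∀ t : ℝ, ∫ y : EuclideanSpace ℝ (Fin (k+1)), Real.cos (ρ * t) * g (t, y) =
      κ * ∫ s in Set.Ioi (0:ℝ), s ^ k * (Real.cos (ρ * t) * f (√(t^2+s^2))) := by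
    intro t
    exact hpolar (fun s => Real.cos (ρ * t) * f (√(t^2+s^2)))
  simp_rw [e2]
  rw [integral_const_mul]
  congr 1
  -- product integrability
  set G : ℝ × ℝ → ℝ := fun q => q.2 ^ k * (Real.cos (ρ * q.1) * f (√(q.1^2+q.2^2))) with hG
  have hGm : Measurable G := by
    simp only [hG]; fun_prop
  have hGi : Integrable G (volume.prod (volume.restrict (Set.Ioi (0:ℝ)))) := by
    rw [integrable_prod_iff hGm.aestronglyMeasurable]
    constructor
    · filter_upwards [hgci.prod_right_ae] with t ht
      have := (integrable_fun_norm_addHaar (E := EuclideanSpace ℝ (Fin (k+1))) volume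
        (f := fun s => Real.cos (ρ * t) * f (√(t^2+s^2)))).1 ht
      simpa [IntegrableOn, hG] using this
    · have h1 := hgci.norm.integral_prod_left
      have h2 : (fun t : ℝ => ∫ s in Set.Ioi (0:ℝ), ‖G (t, s)‖) = fun t : ℝ => κ⁻¹ *
          ∫ y : EuclideanSpace ℝ (Fin (k+1)), ‖Real.cos (ρ * t) * g (t, y)‖ := by
        ext t
        have := hpolar (fun s => ‖Real.cos (ρ * t) * f (√(t^2+s^2))‖)
        simp only [hg]
        rw [this, ← mul_assoc, inv_mul_cancel₀ hκ0.ne', one_mul]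
        apply setIntegral_congr_fun measurableSet_Ioi
        intro s hs
        simp only [hG]
        rw [norm_mul, norm_pow, Real.norm_of_nonneg (le_of_lt hs)]
      rw [h2]
      exact h1.const_mul _
  have e3 : ∫ t : ℝ, ∫ s in Set.Ioi (0:ℝ), s ^ k * (Real.cos (ρ * t) * f (√(t^2+s^2))) =
      ∫ q : ℝ × ℝ, (Set.univ ×ˢ Set.Ioi (0:ℝ)).indicator G q := by
    rw [← integral_prod G hGi, integral_indicator (MeasurableSet.univ.prod measurableSet_Ioi),
      Measure.volume_eq_prod, ← Measure.prod_restrict, Measure.restrict_univ]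
  rw [e3, ← integral_comp_polarCoord_symm]
  have e4 : ∀ q ∈ polarCoord.target, q.1 • (Set.univ ×ˢ Set.Ioi (0:ℝ)).indicator G (polarCoord.symm q) =
      (Set.univ ×ˢ Set.Ioo 0 π).indicator (fun q : ℝ × ℝ =>
        q.1 ^ (k+1) * f q.1 * (Real.cos (ρ * q.1 * Real.cos q.2) * Real.sin q.2 ^ k)) q := by
    rintro ⟨r, θ⟩ hq
    simp only [polarCoord_target, Set.mem_prod, Set.mem_Ioi, Set.mem_Ioo] at hq
    obtain ⟨hr, hθ1, hθ2⟩ := hq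
    have hsin : 0 < r * Real.sin θ ↔ 0 < θ := by
      rw [mul_pos_iff_of_pos_left hr]
      constructor
      · intro h
        by_contra! h'
        exact absurd (Real.sin_nonpos_of_nonpos_of_neg_pi_le h' hθ1.le) (by linarith)
      · intro h; exact Real.sin_pos_of_pos_of_lt_pi h hθ2
    simp only [polarCoord_symm_apply, Set.indicator, Set.mem_prod, Set.mem_univ, true_and, Set.mem_Ioi, Set.mem_Ioo,
      hsin, hθ2, and_true, hG]
    split_ifs with h
    · have : √((r * Real.cos θ)^2 + (r * Real.sin θ)^2) = r := by
        rw [show (r * Real.cos θ)^2 + (r * Real.sin θ)^2 = r^2 * (Real.sin θ ^2 + Real.cos θ^2) by ring,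
          Real.sin_sq_add_cos_sq, mul_one, Real.sqrt_sq hr.le]
      rw [this, smul_eq_mul, mul_pow, pow_succ, mul_assoc ρ]
      ring
    · simp
  rw [setIntegral_congr_fun polarCoord.open_target.measurableSet e4,
    setIntegral_indicator (MeasurableSet.univ.prod measurableSet_Ioo)]
  have e5 : polarCoord.target ∩ (Set.univ ×ˢ Set.Ioo 0 π) = Set.Ioi (0:ℝ) ×ˢ Set.Ioo 0 π := by
    ext ⟨r, θ⟩
    simp only [polarCoord_target, Set.mem_inter_iff, Set.mem_prod, Set.mem_Ioi, Set.mem_Ioo, Set.mem_univ, true_and]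
    constructor
    · rintro ⟨⟨h1, _⟩, h2⟩; exact ⟨h1, h2⟩
    · rintro ⟨h1, h2⟩; exact ⟨⟨h1, by linarith [Real.pi_pos], h2.2⟩, h2⟩
  rw [e5, Measure.volume_eq_prod, setIntegral_prod]
  · apply setIntegral_congr_fun measurableSet_Ioi
    intro r hr
    simp only
    rw [integral_const_mul, Hf, intervalIntegral.integral_of_le Real.pi_pos.le, integral_Ioc_eq_integral_Ioo]
  · have hr : IntegrableOn (fun r : ℝ => r ^ (k+1) * f r) (Set.Ioi 0) := by
      have := (integrable_fun_norm_addHaar (E := EuclideanSpace ℝ (Fin (k+2))) volume (f := f)).1 hfi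
      simpa using this
    have hs : IntegrableOn (fun _ : ℝ => (1:ℝ)) (Set.Ioo 0 π) := by
      rw [integrableOn_const_iff]; right; simp
    have h := Integrable.mul_prod hr hs
    rw [Measure.prod_restrict] at h
    refine Integrable.mono' h.norm ?_ ?_
    · exact (by fun_prop : Measurable fun q : ℝ × ℝ =>
        q.1 ^ (k+1) * f q.1 * (Real.cos (ρ * q.1 * Real.cos q.2) * Real.sin q.2 ^ k)).aestronglyMeasurable
    · refine Eventually.of_forall fun q => ?_
      rw [norm_mul]
      simp only [mul_one]
      apply mul_le_of_le_one_right (norm_nonneg _)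
      rw [norm_mul, norm_pow]
      exact mul_le_one₀ (by simpa using Real.abs_cos_le_one _) (by positivity) (pow_le_one₀ (norm_nonneg _) (by simpa using Real.abs_sin_le_one _))

/-- radial profile -/
def prof (m : ℝ) (φ : ℝ → ℝ) (r : ℝ) : ℝ := if |r - 1| ≤ m then φ |r - 1| else 0

lemma prof_meas (m : ℝ) (φ : ℝ → ℝ) (hφ : Measurable φ) : Measurable (prof m φ) := by
  unfold prof
  refine Measurable.ite ?_ (by fun_prop) measurable_const
  exact measurableSet_le (by fun_prop) measurable_const

lemma prof_nonneg (m : ℝ) (φ : ℝ → ℝ) (hφ : ∀ t, 0 ≤ t → 0 ≤ φ t) (r : ℝ) : 0 ≤ prof m φ r := by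
  unfold prof; split_ifs
  · exact hφ _ (abs_nonneg _)
  · exact le_rfl

lemma prof_int (m : ℝ) (φ : ℝ → ℝ) (hi : IntegrableOn φ (Set.Ioo 0 m)) :
    Integrable (prof m φ) ∧ ∫ r, prof m φ r = 2 * ∫ t in Set.Ioo 0 m, φ t := by
  set h : ℝ → ℝ := (Set.Iic m).indicator φ with hh
  have e : prof m φ = fun r => (fun u => h |u|) (r - 1) := by
    ext r
    simp [prof, hh, Set.indicator]
  have hint : IntegrableOn h (Set.Ioi 0) := by
    rw [hh, integrableOn_indicator_iff measurableSet_Iic, Set.Iic_inter_Ioi]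
    rw [integrableOn_Ioc_iff_integrableOn_Ioo]
    exact hi
  have h2 : Integrable (fun u => h |u|) := by
    have := (integrable_fun_norm_addHaar (E := ℝ) volume (f := h)).2 (by simpa using hint)
    simpa using this
  constructor
  · rw [e]; exact h2.comp_sub_right 1
  · rw [e, integral_sub_right_eq_self (fun u => h |u|) 1, integral_comp_abs, hh,
      setIntegral_indicator measurableSet_Iic, Set.Ioi_inter_Iic, integral_Ioc_eq_integral_Ioo]

lemma prof_compare (m : ℝ) (hm : m ≤ 1/2) (φ Y : ℝ → ℝ) (hi : IntegrableOn φ (Set.Ioo 0 m))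
    (hY : Measurable Y) (A B : ℝ) (hA : ∀ r, A * prof m φ r ≤ Y r) (hB : ∀ r, |Y r| ≤ B * prof m φ r) :
    IntegrableOn Y (Set.Ioi 0) ∧ A * (2 * ∫ t in Set.Ioo 0 m, φ t) ≤ ∫ r in Set.Ioi 0, Y r ∧
      ∫ r in Set.Ioi 0, Y r ≤ B * (2 * ∫ t in Set.Ioo 0 m, φ t) := by
  obtain ⟨h1, h2⟩ := prof_int m φ hi
  have hYi : Integrable Y := (h1.const_mul B).mono' hY.aestronglyMeasurable
    (Eventually.of_forall fun r => hB r)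
  have h3 : ∫ r in Set.Ioi 0, Y r = ∫ r, Y r := by
    apply setIntegral_eq_integral_of_forall_compl_eq_zero
    intro r hr
    have hr' : r ≤ 0 := by simpa using hr
    have : prof m φ r = 0 := by
      unfold prof
      rw [if_neg]
      rw [abs_of_nonpos (by linarith)]
      linarith
    have := hB r
    simp_all
  refine ⟨hYi.integrableOn, ?_, ?_⟩
  · rw [h3, ← h2, ← integral_const_mul]
    exact integral_mono (h1.const_mul A) hYi hA
  · rw [h3, ← h2, ← integral_const_mul]
    exact integral_mono hYi (h1.const_mul B) (fun r => (le_abs_self _).trans (hB r))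

lemma q_bounds (k : ℕ) (s γ c C : ℝ) (hγ : 1 < γ) (hc : 0 < c) (hcC : c ≤ C) :
    ∃ c1 C1 : ℝ, 0 < c1 ∧ 0 < C1 ∧ ∀ g : ℝ → ℝ → ℝ, IsAdmissible s γ c C g →
      ∀ ε m : ℝ, 0 < ε → ε < 1 → 0 < m → m ≤ 1/2 →
      ∀ a : ℝ → ℝ, Measurable a → (∀ t, 0 ≤ a t) →
        IntegrableOn (fun t => a t ^ 2) (Set.Ioo 0 m) volume →
        (c1 * ∫ t in Set.Ioo (0:ℝ) m, a t ^ 2 * (ε + t ^ γ))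
            ≤ (∫ ξ : Rd (k+2), ‖radialFT (k+2) m a ξ‖ ^ 2 * g ε ‖ξ‖) ∧
          (∫ ξ : Rd (k+2), ‖radialFT (k+2) m a ξ‖ ^ 2 * g ε ‖ξ‖)
            ≤ C1 * (∫ t in Set.Ioo (0:ℝ) m, a t ^ 2 * (ε + t ^ γ)) := by
  set κ : ℝ := ((k+2 : ℕ) : ℝ) * volume.real (Metric.ball (0 : Rd (k+2)) 1) with hκ
  have hκ0 : 0 < κ := by
    have : 0 < volume.real (Metric.ball (0 : Rd (k+2)) 1) :=
      ENNReal.toReal_pos (Metric.measure_ball_pos _ _ one_pos).ne' measure_ball_lt_top.ne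
    positivity
  have hC : 0 < C := lt_of_lt_of_le hc hcC
  refine ⟨κ * ((1/2)^(k+1) * c) * 2, κ * ((3/2)^(k+1) * C) * 2, by positivity, by positivity, ?_⟩
  intro g hg ε m hε hε1 hm hm2 a ha ha0 hai
  obtain ⟨hgm, hgp, -, hgb⟩ := hg
  have hεI : ε ∈ Set.Ioo (0:ℝ) 1 := ⟨hε, hε1⟩
  have hφi : IntegrableOn (fun t => a t ^ 2 * (ε + t ^ γ)) (Set.Ioo 0 m) := by
    refine Integrable.mul_bdd (c := 2) hai ?_ ?_
    · exact (by fun_prop : Measurable fun t : ℝ => ε + t ^ γ).aestronglyMeasurable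
    · filter_upwards [ae_restrict_mem measurableSet_Ioo] with t ht
      have : t ^ γ ≤ 1 := Real.rpow_le_one ht.1.le (by linarith [ht.2]) (by linarith)
      have h0 : 0 ≤ t ^ γ := Real.rpow_nonneg ht.1.le _
      rw [Real.norm_of_nonneg (by linarith)]
      linarith
  have e : ∀ ξ : Rd (k+2), ‖radialFT (k+2) m a ξ‖ ^ 2 * g ε ‖ξ‖ =
      (fun r => prof m (fun t => a t ^ 2) r * g ε r) ‖ξ‖ := by
    intro ξ
    simp only [radialFT, prof]
    split_ifs with h
    · simp
    · simp
  simp_rw [e]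
  rw [integral_fun_norm_addHaar volume (fun r => prof m (fun t => a t ^ 2) r * g ε r)]
  simp only [finrank_euclideanSpace, Fintype.card_fin, nsmul_eq_mul, smul_eq_mul]
  have hassoc : ∀ I : ℝ, ((k+2 : ℕ) : ℝ) * (volume.real (Metric.ball (0 : Rd (k+2)) 1) * I) = κ * I := by
    intro I; rw [hκ, mul_assoc]
  rw [hassoc, show k + 2 - 1 = k + 1 from rfl]
  have hkey : ∀ r, ((1/2)^(k+1) * c) * prof m (fun t => a t ^ 2 * (ε + t ^ γ)) r ≤ 
      r ^ (k+1) * (prof m (fun t => a t ^ 2) r * g ε r) ∧ 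
      |r ^ (k+1) * (prof m (fun t => a t ^ 2) r * g ε r)| ≤ 
      ((3/2)^(k+1) * C) * prof m (fun t => a t ^ 2 * (ε + t ^ γ)) r := by
    intro r
    simp only [prof]
    split_ifs with h
    · have h' := abs_le.1 h
      have hr1 : 1/2 ≤ r := by linarith
      have hr2 : r ≤ 3/2 := by linarith
      obtain ⟨g1, g2⟩ := hgb ε hεI r (h.trans hm2)
      have hg0 := hgp ε hεI r
      have ht : 0 ≤ |r - 1| ^ γ := Real.rpow_nonneg (abs_nonneg _) _
      have hn : 0 ≤ r ^ (k+1) * (a |r-1| ^ 2 * g ε r) := by positivity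
      rw [abs_of_nonneg hn]
      constructor
      · calc (1/2)^(k+1) * c * (a |r-1| ^ 2 * (ε + |r-1| ^ γ)) 
            = (1/2)^(k+1) * (a |r-1| ^ 2 * (c * (ε + |r-1| ^ γ))) := by ring
          _ ≤ _ := by gcongr
      · calc r ^ (k+1) * (a |r-1| ^ 2 * g ε r) ≤ (3/2)^(k+1) * (a |r-1| ^ 2 * (C * (ε + |r-1| ^ γ))) := by gcongr
          _ = _ := by ring
    · simp
  obtain ⟨-, h1, h2⟩ := prof_compare m hm2 (fun t => a t ^ 2 * (ε + t ^ γ)) 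
    (fun r => r ^ (k+1) * (prof m (fun t => a t ^ 2) r * g ε r)) hφi
    (by
      have := hgm ε hεI
      have := prof_meas m (fun t => a t ^ 2) (by fun_prop)
      fun_prop) _ _ (fun r => (hkey r).1) (fun r => (hkey r).2)
  constructor
  · calc _ = κ * ((1 / 2) ^ (k + 1) * c * (2 * ∫ t in Set.Ioo 0 m, a t ^ 2 * (ε + t ^ γ))) := by ring
      _ ≤ _ := by gcongr
  · calc _ ≤ κ * ((3 / 2) ^ (k + 1) * C * (2 * ∫ t in Set.Ioo 0 m, a t ^ 2 * (ε + t ^ γ))) := by gcongr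
      _ = _ := by ring

lemma Hf_abs_le (k : ℕ) (z : ℝ) : |Hf k z| ≤ π := by
  have := intervalIntegral.norm_integral_le_of_norm_le_const (a := 0) (b := π) (C := 1)
    (f := fun θ => Real.cos (z * Real.cos θ) * Real.sin θ ^ k) (fun θ _ => by
      rw [norm_mul, norm_pow]
      exact mul_le_one₀ (by simpa using Real.abs_cos_le_one _) (by positivity) (pow_le_one₀ (norm_nonneg _) (by simpa using Real.abs_sin_le_one _)))
  rw [Real.norm_eq_abs] at this
  simpa [abs_of_pos Real.pi_pos, Hf] using this

lemma Hf_meas (k : ℕ) : Measurable (Hf k) :=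
  (continuous_iff_continuousAt.2 fun z => (Hf_deriv k z).continuousAt).measurable

lemma v_low (k : ℕ) : ∃ κ : ℝ, 0 < κ ∧ ∀ m : ℝ, 0 < m → m ≤ 1/2 →
    ∀ a : ℝ → ℝ, Measurable a → (∀ t, 0 ≤ a t) → IntegrableOn a (Set.Ioo 0 m) volume →
    ∀ (x : Rd (k+2)) (l σ : ℝ), (σ = 1 ∨ σ = -1) → 0 ≤ l →
    (∀ r, |r - 1| ≤ m → l ≤ σ * Hf k (2 * π * ‖x‖ * r)) →
    κ * l * (∫ t in Set.Ioo 0 m, a t) ≤ ‖𝓕⁻ (radialFT (k+2) m a) x‖ := by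
  obtain ⟨κ, hκ, H⟩ := radial_cos k
  refine ⟨κ * (1/2)^(k+1) * 2, by positivity, ?_⟩
  intro m hm hm2 a ha ha0 hai x l σ hσ hl hH
  have hpm := prof_meas m a ha
  have hp0 := prof_nonneg m a (fun t _ => ha0 t)
  have hpow : ∀ r, |r ^ (k+1) * prof m a r| ≤ (3/2)^(k+1) * prof m a r := by
    intro r
    rw [abs_mul, abs_of_nonneg (hp0 r)]
    by_cases h : |r - 1| ≤ m
    · have h' := abs_le.1 h
      have hr1 : 1/2 ≤ r := by linarith
      have hr2 : r ≤ 3/2 := by linarith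
      rw [abs_of_nonneg (by positivity)]
      have := hp0 r
      gcongr
    · simp [prof, h]
  have hint : Integrable (fun v : EuclideanSpace ℝ (Fin (k+2)) => prof m a ‖v‖) volume := by
    rw [integrable_fun_norm_addHaar]
    obtain ⟨h1, -, -⟩ := prof_compare m hm2 a (fun r => r ^ (k+1) * prof m a r) hai (by fun_prop)
      (-(3/2)^(k+1)) ((3/2)^(k+1)) (fun r => by have := neg_le_of_abs_le (hpow r); linarith) hpow
    simpa using h1
  have hE := H (prof m a) hpm hint x
  have hσa : |σ| = 1 := by rcases hσ with h | h <;> simp [h]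
  have hHm : Measurable (fun r => Hf k (2 * π * ‖x‖ * r)) := (Hf_meas k).comp (by fun_prop)
  obtain ⟨-, h2, -⟩ := prof_compare m hm2 a (fun r => σ * (r ^ (k+1) * prof m a r * Hf k (2 * π * ‖x‖ * r))) hai
    (by fun_prop) ((1/2)^(k+1) * l) ((3/2)^(k+1) * π) (fun r => by
      by_cases h : |r - 1| ≤ m
      · have h' := abs_le.1 h
        have hr1 : 1/2 ≤ r := by linarith
        have := hp0 r
        have := hH r h
        calc (1/2)^(k+1) * l * prof m a r = (1/2)^(k+1) * prof m a r * l := by ring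
          _ ≤ r^(k+1) * prof m a r * (σ * Hf k (2 * π * ‖x‖ * r)) := by gcongr
          _ = _ := by ring
      · simp [prof, h]) (fun r => by
      rw [abs_mul, hσa, one_mul, abs_mul]
      have := hpow r
      have h3 := Hf_abs_le k (2 * π * ‖x‖ * r)
      have := hp0 r
      calc _ ≤ ((3/2)^(k+1) * prof m a r) * π := by gcongr
        _ = _ := by ring)
  rw [integral_const_mul] at h2
  have hre : (𝓕⁻ (radialFT (k+2) m a) x).re = ∫ v : Rd (k+2), Real.cos (2 * π * ⟪v, x⟫) * prof m a ‖v‖ := by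
    rw [Real.fourierInv_eq']
    have hV : ∀ v : Rd (k+2), radialFT (k+2) m a v = ((prof m a ‖v‖ : ℝ) : ℂ) := by
      intro v; simp only [radialFT, prof]; split_ifs <;> simp
    simp_rw [hV]
    have := integral_re (μ := (volume : Measure (Rd (k+2)))) (𝕜 := ℂ) (f := fun v : Rd (k+2) => 
      Complex.exp ((↑(2 * π * ⟪v, x⟫) * Complex.I)) • ((prof m a ‖v‖ : ℝ) : ℂ)) (by
        refine (hint.ofReal (𝕜 := ℂ)).bdd_mul (c := 1) ?_ ?_
        · exact (by fun_prop : Continuous fun v : Rd (k+2) => Complex.exp ((↑(2 * π * ⟪v, x⟫) * Complex.I))).aestronglyMeasurable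
        · exact Eventually.of_forall fun v => (Complex.norm_exp_ofReal_mul_I _).le)
    simp only [RCLike.re_to_complex] at this
    rw [← this]
    congr 1
    ext v
    rw [smul_eq_mul, Complex.re_mul_ofReal, Complex.exp_ofReal_mul_I_re]
  refine le_trans ?_ (Complex.abs_re_le_norm _)
  rw [hre, hE, abs_mul, abs_of_pos hκ]
  calc κ * (1/2)^(k+1) * 2 * l * ∫ t in Set.Ioo 0 m, a t = κ * ((1/2)^(k+1) * l * (2 * ∫ t in Set.Ioo 0 m, a t)) := by ring
    _ ≤ κ * |σ * ∫ r in Set.Ioi 0, r ^ (k+1) * prof m a r * Hf k (2 * π * ‖x‖ * r)| := by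
      gcongr
      exact h2.trans (le_abs_self _)
    _ = _ := by rw [abs_mul, hσa, one_mul]

lemma Lp_low {d : ℕ} (p : ℝ) (hp : 0 < p) (v : Rd d → ℂ) (s : Finset ℕ) (S : ℕ → Set (Rd d))
    (hS : ∀ i ∈ s, MeasurableSet (S i)) (hdis : Set.PairwiseDisjoint (↑s) S)
    (l w : ℕ → ℝ) (hl : ∀ i ∈ s, 0 ≤ l i) (hlv : ∀ i ∈ s, ∀ x ∈ S i, l i ≤ ‖v x‖)
    (hw : ∀ i ∈ s, 0 ≤ w i) (hwv : ∀ i ∈ s, ENNReal.ofReal (w i) ≤ volume (S i)) :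
    ENNReal.ofReal ((∑ i ∈ s, l i ^ p * w i) ^ (1/p)) ≤ eLpNorm v (ENNReal.ofReal p) volume := by
  rw [eLpNorm_eq_lintegral_rpow_enorm_toReal (by simpa using hp) ENNReal.ofReal_ne_top,
    ENNReal.toReal_ofReal hp.le]
  have hterm : ∀ i ∈ s, 0 ≤ l i ^ p * w i := fun i hi =>
    mul_nonneg (Real.rpow_nonneg (hl i hi) _) (hw i hi)
  rw [← ENNReal.ofReal_rpow_of_nonneg (Finset.sum_nonneg hterm) (by positivity)]
  gcongr
  rw [ENNReal.ofReal_sum_of_nonneg hterm]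
  calc ∑ i ∈ s, ENNReal.ofReal (l i ^ p * w i) ≤ ∑ i ∈ s, ∫⁻ x in S i, ‖v x‖ₑ ^ p := by
        apply Finset.sum_le_sum
        intro i hi
        rw [ENNReal.ofReal_mul (Real.rpow_nonneg (hl i hi) _)]
        calc _ ≤ ENNReal.ofReal (l i ^ p) * volume (S i) := by gcongr; exact hwv i hi
          _ = ∫⁻ x in S i, ENNReal.ofReal (l i ^ p) := by rw [setLIntegral_const]
          _ ≤ _ := by
            apply setLIntegral_mono' (hS i hi)
            intro x hx
            rw [← ENNReal.ofReal_rpow_of_nonneg (hl i hi) hp.le]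
            gcongr
            rw [← ofReal_norm]
            exact ENNReal.ofReal_le_ofReal (hlv i hi x hx)
    _ = ∫⁻ x in ⋃ i ∈ s, S i, ‖v x‖ₑ ^ p := by
        rw [lintegral_biUnion_finset hdis hS]
    _ ≤ ∫⁻ x, ‖v x‖ₑ ^ p := setLIntegral_le_lintegral _ _

lemma shell_vol (k : ℕ) (ρ h : ℝ) (hh : 0 < h) (hρ : h ≤ ρ) :
    ENNReal.ofReal (volume.real (Metric.ball (0 : Rd (k+2)) 1) * (2 * h * ρ ^ (k+1))) ≤
      volume (Metric.closedBall (0 : Rd (k+2)) (ρ + h) \ Metric.closedBall 0 (ρ - h)) := by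
  have e : ∀ R : ℝ, 0 ≤ R → volume (Metric.closedBall (0 : Rd (k+2)) R) =
      ENNReal.ofReal (R ^ (k+2) * volume.real (Metric.ball (0 : Rd (k+2)) 1)) := by
    intro R hR
    rw [Measure.addHaar_closedBall _ _ hR, finrank_euclideanSpace, Fintype.card_fin,
      ENNReal.ofReal_mul (by positivity), ofReal_measureReal measure_ball_lt_top.ne]
  rw [measure_sdiff (Metric.closedBall_subset_closedBall (by linarith))
    measurableSet_closedBall.nullMeasurableSet measure_closedBall_lt_top.ne, e _ (by linarith), e _ (by linarith),
    ← ENNReal.ofReal_sub _ (by have : 0 ≤ ρ - h := by linarith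
                               positivity)]
  apply ENNReal.ofReal_le_ofReal
  rw [← sub_mul, mul_comm]
  gcongr
  have h1 : (ρ - h) ^ (k+1) ≤ (ρ + h) ^ (k+1) := by
    have : 0 ≤ ρ - h := by linarith
    gcongr; linarith
  have h2 : ρ ^ (k+1) ≤ (ρ + h) ^ (k+1) := by
    have : 0 ≤ ρ := by linarith
    gcongr; linarith
  rw [pow_succ (ρ+h) (k+1), pow_succ (ρ - h) (k+1)]
  nlinarith [mul_le_mul_of_nonneg_right h1 (by linarith : 0 ≤ ρ - h)]

lemma Hf_shell (k : ℕ) : ∃ b h : ℝ, 0 < b ∧ 0 < h ∧ h ≤ 1/4 ∧ ∀ i : ℕ, 1 ≤ i →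
    ∃ ρ ∈ Set.Icc (2 * (i:ℝ)) (2 * i + 1), ∃ σ : ℝ, (σ = 1 ∨ σ = -1) ∧
    ∀ m : ℝ, 0 < m → m * i ≤ h → ∀ y r : ℝ, |y - ρ| ≤ h → |r - 1| ≤ m →
      b * (i:ℝ) ^ (-(((k:ℝ)+1)/2)) ≤ σ * Hf k (2 * π * y * r) := by
  obtain ⟨b, η, hb, hη, hη1, H⟩ := Hf_good k
  have hpi := Real.pi_gt_three
  have hpi4 : π < 3.15 := Real.pi_lt_d2
  have hpi0 := Real.pi_pos
  refine ⟨b * 20 ^ (-(((k:ℝ)+1)/2)), η / (10 * π), by positivity, by positivity, ?_, ?_⟩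
  · rw [div_le_iff₀ (by positivity)]; linarith
  intro i hi
  have hi1 : (1:ℝ) ≤ i := by exact_mod_cast hi
  obtain ⟨y0, hy0, σ, hσ, hH⟩ := H (2 * π * (2 * i)) (by nlinarith)
  have hρ1 : 2 * (i:ℝ) ≤ y0 / (2 * π) := by
    rw [le_div_iff₀ (by positivity)]; linarith [hy0.1]
  have hρ2 : y0 / (2 * π) ≤ 2 * i + 1 := by
    rw [div_le_iff₀ (by positivity)]; nlinarith [hy0.2]
  refine ⟨y0 / (2 * π), ⟨hρ1, hρ2⟩, σ, hσ, ?_⟩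
  intro m hm hmi y r hy hr
  set h := η / (10 * π) with hh
  have hh0 : 0 < h := by positivity
  have hh4 : h ≤ 1/4 := by rw [hh, div_le_iff₀ (by positivity)]; linarith
  have hηh : η = 10 * π * h := by rw [hh]; field_simp
  set ρ := y0 / (2 * π) with hρ
  have hy0ρ : y0 = 2 * π * ρ := by rw [hρ]; field_simp
  have hyb := abs_le.1 hy
  have hy4 : |y| ≤ 4 * i := by rw [abs_le]; constructor <;> linarith
  have hz : |2 * π * y * r - y0| ≤ η := by
    rw [hy0ρ, show 2 * π * y * r - 2 * π * ρ = 2 * π * (y * (r - 1) + (y - ρ)) by ring, abs_mul,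
      abs_of_pos (by positivity : 0 < 2 * π)]
    have h1 : |y * (r - 1) + (y - ρ)| ≤ 5 * h := by
      refine (abs_add_le _ _).trans ?_
      rw [abs_mul]
      have : |y| * |r - 1| ≤ 4 * i * m := by gcongr
      linarith
    rw [hηh]
    calc 2 * π * |y * (r - 1) + (y - ρ)| ≤ 2 * π * (5 * h) := by gcongr
      _ = _ := by ring
  have hfin := hH _ hz
  refine le_trans ?_ hfin
  have hzb := abs_le.1 hz
  have hz0 : 0 < 2 * π * y * r := by
    have : 0 < 2 * π * ρ - η := by nlinarith
    linarith [hzb.1]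
  have hz20 : 2 * π * y * r ≤ 20 * i := by
    have := hy0.2
    nlinarith [hzb.2]
  rw [mul_assoc, ← Real.mul_rpow (by norm_num) (by positivity)]
  refine mul_le_mul_of_nonneg_left ?_ hb.le
  apply Real.rpow_le_rpow_of_nonpos hz0 hz20
  have : (0:ℝ) ≤ k := Nat.cast_nonneg k
  linarith

lemma sum_low (k : ℕ) (p h : ℝ) (hp : 2 < p) (hh : 0 < h) (hh1 : h ≤ 1/4) :
    ∃ c : ℝ, 0 < c ∧ ∀ m : ℝ, 0 < m → m ≤ h ^ 2 → ∃ N : ℕ, m * N ≤ h ∧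
      (p * ((k:ℝ)+1) < 2 * (k+2) → (c * m ^ (((k:ℝ)+1)/2 - (k+2)/p)) ^ p ≤
        ∑ i ∈ Finset.Icc 1 N, (i:ℝ) ^ ((k:ℝ) + 1 - ((k:ℝ)+1)/2 * p)) ∧ 
      (p * ((k:ℝ)+1) = 2 * (k+2) → (c * |Real.log m| ^ (1/p)) ^ p ≤
        ∑ i ∈ Finset.Icc 1 N, (i:ℝ) ^ ((k:ℝ) + 1 - ((k:ℝ)+1)/2 * p)) := by
  have hp0 : 0 < p := by linarith
  have hk0 : (0:ℝ) ≤ k := Nat.cast_nonneg k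
  set e : ℝ := (k:ℝ) + 1 - ((k:ℝ)+1)/2 * p with he
  have he0 : e ≤ 0 := by rw [he]; nlinarith
  set c1 : ℝ := ((h/2) ^ (e+1)) ^ (1/p) with hc1
  set c2 : ℝ := (1/2 : ℝ) ^ (1/p) with hc2
  have hc1p : 0 < c1 := by positivity
  have hc2p : 0 < c2 := by positivity
  have hpow : ∀ x : ℝ, 0 ≤ x → (x ^ (1/p)) ^ p = x := by
    intro x hx
    rw [← Real.rpow_mul hx, one_div_mul_cancel hp0.ne', Real.rpow_one]
  refine ⟨min c1 c2, lt_min hc1p hc2p, ?_⟩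
  intro m hm hmh
  have hmh1 : m ≤ h := by nlinarith
  refine ⟨⌊h/m⌋₊, ?_, ?_, ?_⟩
  · have := Nat.floor_le (by positivity : 0 ≤ h/m)
    rw [le_div_iff₀ hm] at this
    linarith
  · intro hlt
    have he1 : 0 < e + 1 := by rw [he]; nlinarith
    set N := ⌊h/m⌋₊ with hN
    have h1m : 1 ≤ h / m := by rw [le_div_iff₀ hm]; linarith
    have hN1 : 1 ≤ N := Nat.le_floor (by simpa using h1m)
    have hN1' : (1:ℝ) ≤ N := by exact_mod_cast hN1
    have hNlow : h / 2 * m⁻¹ ≤ N := by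
      have := Nat.lt_floor_add_one (h/m)
      rw [← hN] at this
      rw [div_eq_mul_inv] at this
      linarith
    calc (min c1 c2 * m ^ (((k:ℝ)+1)/2 - (k+2)/p)) ^ p ≤ (c1 * m ^ (((k:ℝ)+1)/2 - (k+2)/p)) ^ p := by
          gcongr; exact min_le_left _ _
      _ = (h/2 * m⁻¹) ^ (e+1) := by
          rw [Real.mul_rpow hc1p.le (by positivity), hc1, hpow _ (by positivity), 
            ← Real.rpow_mul hm.le, Real.mul_rpow (by positivity) (by positivity), Real.inv_rpow hm.le,
            ← Real.rpow_neg hm.le]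
          congr 2
          rw [he]; field_simp; ring
      _ ≤ (N:ℝ) ^ (e+1) := by gcongr
      _ = ∑ i ∈ Finset.Icc 1 N, (N:ℝ) ^ e := by
          rw [Finset.sum_const, Nat.card_Icc, nsmul_eq_mul, Nat.add_sub_cancel, Real.rpow_add_one (by positivity)]
          ring
      _ ≤ _ := by
          apply Finset.sum_le_sum
          intro i hi
          rw [Finset.mem_Icc] at hi
          apply Real.rpow_le_rpow_of_nonpos _ _ he0
          · exact_mod_cast hi.1
          · exact_mod_cast hi.2
  · intro heq
    have he1 : e = -1 := by rw [he]; linarith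
    set N := ⌊h/m⌋₊ with hN
    have hlogm : Real.log m ≤ 0 := Real.log_nonpos hm.le (by linarith)
    calc (min c1 c2 * |Real.log m| ^ (1/p)) ^ p ≤ (c2 * |Real.log m| ^ (1/p)) ^ p := by
          gcongr; exact min_le_right _ _
      _ = 1/2 * |Real.log m| := by
          rw [Real.mul_rpow hc2p.le (by positivity), hc2, hpow _ (by positivity), hpow _ (by positivity)]
      _ ≤ Real.log (h / m) := by
          rw [abs_of_nonpos hlogm, Real.log_div hh.ne' hm.ne']
          have := Real.log_le_log hm hmh
          rw [Real.log_pow] at this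
          push_cast at this
          linarith
      _ ≤ Real.log (N + 1 : ℕ) := by
          apply Real.log_le_log (by positivity)
          push_cast
          exact (Nat.lt_floor_add_one _).le
      _ ≤ harmonic N := log_add_one_le_harmonic N
      _ = _ := by
          rw [harmonic_eq_sum_Icc, he1]
          push_cast
          simp [Real.rpow_neg_one]

lemma Lp_bound (k : ℕ) (p : ℝ) (hp : 2 < p) : ∃ c m₀ : ℝ, 0 < c ∧ 0 < m₀ ∧ m₀ ≤ 1/2 ∧
    ∀ m : ℝ, 0 < m → m ≤ m₀ →
    ∀ a : ℝ → ℝ, Measurable a → (∀ t, 0 ≤ a t) → IntegrableOn a (Set.Ioo 0 m) volume →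
    ENNReal.ofReal (c * (∫ t in Set.Ioo (0:ℝ) m, a t)) ≤ eLpNorm (𝓕⁻ (radialFT (k+2) m a)) (ENNReal.ofReal p) volume ∧ 
    (p * ((k:ℝ)+1) < 2 * (k+2) → ENNReal.ofReal (c * (∫ t in Set.Ioo (0:ℝ) m, a t) * 
      m ^ (((k:ℝ)+1)/2 - (k+2)/p)) ≤ eLpNorm (𝓕⁻ (radialFT (k+2) m a)) (ENNReal.ofReal p) volume) ∧
    (p * ((k:ℝ)+1) = 2 * (k+2) → ENNReal.ofReal (c * (∫ t in Set.Ioo (0:ℝ) m, a t) * 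
      |Real.log m| ^ (1/p)) ≤ eLpNorm (𝓕⁻ (radialFT (k+2) m a)) (ENNReal.ofReal p) volume) := by
  have hp0 : 0 < p := by linarith
  obtain ⟨κ, hκ, hv⟩ := v_low k
  obtain ⟨b, h, hb, hh, hh4, hsh⟩ := Hf_shell k
  obtain ⟨c0, hc0, hsum⟩ := sum_low k p h hp hh hh4
  obtain ⟨l0, hl0, hlow⟩ := Hf_low k
  set ω := volume.real (Metric.ball (0 : Rd (k+2)) 1) with hω
  have hω0 : 0 < ω := 
      ENNReal.toReal_pos (Metric.measure_ball_pos _ _ one_pos).ne' measure_ball_lt_top.ne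
  set ω1 := volume.real (Metric.closedBall (0 : Rd (k+2)) (1/10)) with hω1
  have hω10 : 0 < ω1 := 
      ENNReal.toReal_pos (Metric.measure_closedBall_pos _ _ (by norm_num)).ne' measure_closedBall_lt_top.ne
  have hpow : ∀ x : ℝ, 0 ≤ x → (x ^ (1/p)) ^ p = x := by
    intro x hx
    rw [← Real.rpow_mul hx, one_div_mul_cancel hp0.ne', Real.rpow_one]
  have hpow' : ∀ x : ℝ, 0 ≤ x → (x ^ p) ^ (1/p) = x := by
    intro x hx
    rw [← Real.rpow_mul hx, mul_one_div_cancel hp0.ne', Real.rpow_one]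
  set cA := κ * l0 * ω1 ^ (1/p) with hcA
  set cB := κ * b * (2 * h * ω) ^ (1/p) * c0 with hcB
  have hcA0 : 0 < cA := by positivity
  have hcB0 : 0 < cB := by positivity
  have hh2 : h ^ 2 ≤ 1/2 := by nlinarith
  refine ⟨min cA cB, h ^ 2, lt_min hcA0 hcB0, by positivity, hh2, ?_⟩
  intro m hm hmh a ha ha0 hai
  set I := ∫ t in Set.Ioo (0:ℝ) m, a t with hI
  have hI0 : 0 ≤ I := integral_nonneg fun t => ha0 t
  have hm2 : m ≤ 1/2 := by linarith
  have hV := hv m hm hm2 a ha ha0 hai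
  set v := 𝓕⁻ (radialFT (k+2) m a) with hvdef
  -- general consequence
  have hgen : ∀ F : ℝ, 0 ≤ F → (∃ N : ℕ, m * N ≤ h ∧ (c0 * F) ^ p ≤
        ∑ i ∈ Finset.Icc 1 N, (i:ℝ) ^ ((k:ℝ) + 1 - ((k:ℝ)+1)/2 * p)) →
        ENNReal.ofReal (min cA cB * I * F) ≤ eLpNorm v (ENNReal.ofReal p) volume := by
    rintro F hF ⟨N, hN, hNs⟩
    choose! ρ hρ σ hσ hHf using hsh
    have key := Lp_low p hp0 v (Finset.Icc 1 N)
      (fun i => Metric.closedBall (0 : Rd (k+2)) (ρ i + h) \ Metric.closedBall 0 (ρ i - h))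
      (fun i _ => measurableSet_closedBall.diff measurableSet_closedBall)
      (by
        intro i hi j hj hij
        simp only [Finset.coe_Icc, Set.mem_Icc] at hi hj
        have aux : ∀ i j : ℕ, 1 ≤ i → i < j → ρ i + h ≤ ρ j - h := by
          intro i j hi hij
          have h1 := (hρ i hi).2
          have h2 := (hρ j (hi.trans hij.le)).1
          have : (i:ℝ) + 1 ≤ j := by exact_mod_cast hij
          linarith
        rw [Function.onFun, Set.disjoint_left]
        rintro x ⟨hx1, hx2⟩ ⟨hx3, hx4⟩
        simp only [Metric.mem_closedBall, dist_zero_right, not_le] at hx1 hx2 hx3 hx4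
        rcases lt_or_gt_of_ne hij with hlt | hlt
        · have := aux i j hi.1 hlt
          linarith
        · have := aux j i hj.1 hlt
          linarith)
      (fun i => κ * (b * (i:ℝ) ^ (-(((k:ℝ)+1)/2))) * I)
      (fun i => ω * (2 * h * (i:ℝ) ^ (k+1)))
      (fun i hi => by positivity)
      (by
        intro i hi x hx
        simp only [Set.mem_sdiff, Metric.mem_closedBall, dist_zero_right, not_le] at hx
        rw [Finset.mem_Icc] at hi
        apply hV x _ (σ i) (hσ i hi.1) (by positivity)
        intro r hr
        refine hHf i hi.1 m hm ?_ ‖x‖ r ?_ hr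
        · refine le_trans ?_ hN
          have : (i:ℝ) ≤ N := by exact_mod_cast hi.2
          gcongr
        · rw [abs_le]; constructor <;> linarith [hx.1, hx.2])
      (fun i hi => by positivity)
      (by
        intro i hi
        rw [Finset.mem_Icc] at hi
        have hi1 : (1:ℝ) ≤ i := by exact_mod_cast hi.1
        have h1 := (hρ i hi.1).1
        refine le_trans ?_ (shell_vol k (ρ i) h hh (by linarith))
        apply ENNReal.ofReal_le_ofReal
        rw [← hω]
        gcongr
        linarith)
    refine le_trans (ENNReal.ofReal_le_ofReal ?_) key
    calc min cA cB * I * F ≤ cB * I * F := by gcongr; exact min_le_right _ _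
      _ = ((cB * I * F) ^ p) ^ (1/p) := by rw [hpow' _ (by positivity)]
      _ ≤ _ := by
        gcongr
        have e1 : ∀ i ∈ Finset.Icc 1 N, (κ * (b * (i:ℝ) ^ (-(((k:ℝ)+1)/2))) * I) ^ p * (ω * (2 * h * (i:ℝ) ^ (k+1))) =
            ((κ * b * I) ^ p * (2 * h * ω)) * (i:ℝ) ^ ((k:ℝ) + 1 - ((k:ℝ)+1)/2 * p) := by
          intro i hi
          rw [Finset.mem_Icc] at hi
          have hi1 : (0:ℝ) < i := by exact_mod_cast hi.1
          rw [show κ * (b * (i:ℝ) ^ (-(((k:ℝ)+1)/2))) * I = (κ * b * I) * (i:ℝ) ^ (-(((k:ℝ)+1)/2)) by ring,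
            Real.mul_rpow (by positivity) (by positivity), ← Real.rpow_mul hi1.le,
            show (k:ℝ) + 1 - ((k:ℝ)+1)/2 * p = -(((k:ℝ)+1)/2) * p + ((k+1 : ℕ):ℝ) by push_cast; ring,
            Real.rpow_add hi1, Real.rpow_natCast]
          ring
        rw [Finset.sum_congr rfl e1, ← Finset.mul_sum]
        calc (cB * I * F) ^ p = ((κ * b * I) ^ p * (2 * h * ω)) * (c0 * F) ^ p := by
              rw [hcB, show κ * b * (2 * h * ω) ^ (1/p) * c0 * I * F = 
                (κ * b * I) * ((2 * h * ω) ^ (1/p)) * (c0 * F) by ring,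
                Real.mul_rpow (by positivity) (by positivity),
                Real.mul_rpow (by positivity) (by positivity), hpow _ (by positivity)]
          _ ≤ _ := by gcongr
  obtain ⟨N, hN, hN1, hN2⟩ := hsum m hm hmh
  refine ⟨?_, fun hlt => hgen _ (by positivity) ⟨N, hN, hN1 hlt⟩, 
    fun heq => hgen _ (by positivity) ⟨N, hN, hN2 heq⟩⟩
  have key := Lp_low p hp0 v {0} (fun _ => Metric.closedBall (0 : Rd (k+2)) (1/10))
    (fun _ _ => measurableSet_closedBall) (by simp) (fun _ => κ * l0 * I) (fun _ => ω1)
    (fun _ _ => by positivity)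
    (by
      intro _ _ x hx
      simp only [Metric.mem_closedBall, dist_zero_right] at hx
      refine hV x l0 1 (Or.inl rfl) hl0.le ?_
      intro r hr
      rw [one_mul]
      apply hlow
      have hr' := abs_le.1 hr
      have hx0 := norm_nonneg x
      have hpi := Real.pi_pos
      have hpi4 : π < 3.15 := Real.pi_lt_d2
      have hr0 : 0 ≤ r := by linarith
      rw [abs_of_nonneg (by positivity)]
      calc 2 * π * ‖x‖ * r ≤ 2 * 3.15 * (1/10) * (3/2) := by gcongr; linarith
        _ ≤ 1 := by norm_num)
    (fun _ _ => hω10.le)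
    (fun _ _ => by rw [hω1, ofReal_measureReal measure_closedBall_lt_top.ne])
  refine le_trans (ENNReal.ofReal_le_ofReal ?_) key
  rw [Finset.sum_singleton, Real.mul_rpow (by positivity) (by positivity), hpow' _ (by positivity)]
  calc min cA cB * I ≤ cA * I := by gcongr; exact min_le_left _ _
    _ = _ := by rw [hcA]; ring

/-- Lemma 2.6: two-sided bounds for `q_ε(v)` and the lower bound
`‖v‖_p ≥ c' (∫₀^m a) F(m)` for the radial trial function `v = 𝓕⁻¹(radialFT)`, where
`F(m) = m^{(d-1)/2 - d/p}` for `2 < p < 2d/(d-1)`, `F(m) = |log m|^{1/p}` at the endpoint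
`p = 2d/(d-1)`, and `F(m) = 1` for larger `p`. -/
theorem stmt9 (d : ℕ) (hd : 2 ≤ d)
    (s γ p c C : ℝ)
    (hs : (d : ℝ) / ((d : ℝ) + 1) < s) (hγ : 1 < γ) (hp : 2 < p)
    (hc : 0 < c) (hcC : c ≤ C) :
    ∃ c' C' ε₀ m₀ : ℝ, 0 < c' ∧ c' ≤ C' ∧
      0 < ε₀ ∧ ε₀ ≤ 1/2 ∧ 0 < m₀ ∧ m₀ ≤ 1/2 ∧
      ∀ g : ℝ → ℝ → ℝ, IsAdmissible s γ c C g →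
      ∀ ε m : ℝ, 0 < ε → ε < ε₀ → 0 < m → m ≤ m₀ →
      ∀ a : ℝ → ℝ, Measurable a → (∀ t, 0 ≤ a t) →
        IntegrableOn (fun t => a t ^ 2) (Set.Ioo 0 m) volume →
        (c' * ∫ t in Set.Ioo (0:ℝ) m, a t ^ 2 * (ε + t ^ γ))
            ≤ (∫ ξ : Rd d, ‖radialFT d m a ξ‖ ^ 2 * g ε ‖ξ‖) ∧
          (∫ ξ : Rd d, ‖radialFT d m a ξ‖ ^ 2 * g ε ‖ξ‖)
            ≤ C' * (∫ t in Set.Ioo (0:ℝ) m, a t ^ 2 * (ε + t ^ γ)) ∧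
          ENNReal.ofReal (c' * (∫ t in Set.Ioo (0:ℝ) m, a t) *
                (if p < 2 * (d : ℝ) / ((d : ℝ) - 1) then m ^ (((d : ℝ) - 1) / 2 - (d : ℝ) / p)
                 else if p = 2 * (d : ℝ) / ((d : ℝ) - 1) then |Real.log m| ^ (1/p)
                 else 1))
            ≤ eLpNorm (𝓕⁻ (radialFT d m a)) (ENNReal.ofReal p) volume := by
  obtain ⟨k, rfl⟩ : ∃ k, d = k + 2 := ⟨d - 2, by omega⟩
  obtain ⟨c1, C1, hc1, hC1, hq⟩ := q_bounds k s γ c C hγ hc hcC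
  obtain ⟨c2, m₀, hc2, hm₀, hm₀2, hL⟩ := Lp_bound k p hp
  refine ⟨min c1 c2, max C1 (min c1 c2), 1/2, m₀, lt_min hc1 hc2, le_max_right _ _,
    by norm_num, le_rfl, hm₀, hm₀2, ?_⟩
  intro g hg ε m hε hε2 hm hmm a ha ha0 hai
  obtain ⟨q1, q2⟩ := hq g hg ε m hε (by linarith) hm (by linarith) a ha ha0 hai
  have hQ0 : 0 ≤ ∫ t in Set.Ioo (0:ℝ) m, a t ^ 2 * (ε + t ^ γ) := by
    apply setIntegral_nonneg measurableSet_Ioo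
    intro t ht
    have := Real.rpow_nonneg ht.1.le γ
    positivity
  have hai1 : IntegrableOn a (Set.Ioo 0 m) volume := by
    have h1 : IntegrableOn (fun _ : ℝ => (1:ℝ)) (Set.Ioo 0 m) := by
      rw [integrableOn_const_iff]; right; simp
    refine Integrable.mono' (h1.add hai) ha.aestronglyMeasurable (Eventually.of_forall fun t => ?_)
    rw [Real.norm_of_nonneg (ha0 t)]
    simp only [Pi.add_apply]
    nlinarith [sq_nonneg (a t - 1), ha0 t]
  obtain ⟨L1, L2, L3⟩ := hL m hm hmm a ha ha0 hai1
  have hI0 : 0 ≤ ∫ t in Set.Ioo (0:ℝ) m, a t := integral_nonneg fun t => ha0 t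
  refine ⟨le_trans (mul_le_mul_of_nonneg_right (min_le_left _ _) hQ0) q1,
    q2.trans (mul_le_mul_of_nonneg_right (le_max_left _ _) hQ0), ?_⟩
  have hk1 : (0:ℝ) < (k:ℝ) + 1 := by positivity
  have ed : ((k + 2 : ℕ) : ℝ) = (k:ℝ) + 2 := by push_cast; ring
  have ed1 : (k:ℝ) + 2 - 1 = (k:ℝ) + 1 := by ring
  rw [ed, ed1]
  split_ifs with h1 h2
  · refine le_trans (ENNReal.ofReal_le_ofReal ?_) (L2 ((lt_div_iff₀ hk1).1 h1))
    gcongr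
    exact min_le_right _ _
  · refine le_trans (ENNReal.ofReal_le_ofReal ?_) (L3 ((eq_div_iff hk1.ne').1 h2))
    gcongr
    exact min_le_right _ _
  · refine le_trans (ENNReal.ofReal_le_ofReal ?_) L1
    rw [mul_one]
    gcongr
    exact min_le_right _ _
end
end
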